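/- arXiv:0708.2082 — 4 statements merged into one kernel-verified Lean document; each statement's English description precedes it below -/
import Mathlib

section
/- Let k be a positive integer and m an integer with 0≤m<k. The form (m,0,k) is SL(2,ℤ)-equivalent to both its conjugate (m,0,−k) and its adjoint (0,−m,k) (i.e., its class is supersymmetric) if and only if m=0, or k is even and m=k/2. -/
/-- The value of the binary quadratic form `f = (m, n, k)`, i.e. `m*x^2 + n*y^2 + k*x*y`. -/
def qval (f : ℤ × ℤ × ℤ) (x y : ℤ) : ℤ := f.1 * x ^ 2 + f.2.1 * y ^ 2 + f.2.2 * x * y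

/-- The discriminant `k^2 - 4*m*n` of the form `f = (m, n, k)`. -/
def formDisc (f : ℤ × ℤ × ℤ) : ℤ := f.2.2 ^ 2 - 4 * f.1 * f.2.1

/-- `SL(2,ℤ)`-equivalence of binary quadratic forms. -/
def SLEquiv (f g : ℤ × ℤ × ℤ) : Prop :=
  ∃ a b c d : ℤ, a * d - b * c = 1 ∧
    ∀ x y : ℤ, qval g x y = qval f (a * x + b * y) (c * x + d * y)

/-- The root with the plus sign of `m*ξ^2 + k*ξ + n = 0`, for `f = (m, n, k)`. -/
noncomputable def xiPlus (f : ℤ × ℤ × ℤ) : ℝ :=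
  (-(f.2.2 : ℝ) + Real.sqrt ((formDisc f : ℤ) : ℝ)) / (2 * (f.1 : ℝ))

/-- The root with the minus sign of `m*ξ^2 + k*ξ + n = 0`, for `f = (m, n, k)`. -/
noncomputable def xiMinus (f : ℤ × ℤ × ℤ) : ℝ :=
  (-(f.2.2 : ℝ) - Real.sqrt ((formDisc f : ℤ) : ℝ)) / (2 * (f.1 : ℝ))

/-- The conjugate `(m, n, -k)` of the form `(m, n, k)`. -/
def conjF (f : ℤ × ℤ × ℤ) : ℤ × ℤ × ℤ := (f.1, f.2.1, -f.2.2)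

/-- The adjoint `(-n, -m, k)` of the form `(m, n, k)`. -/
def adjF (f : ℤ × ℤ × ℤ) : ℤ × ℤ × ℤ := (-f.2.1, -f.1, f.2.2)

/-- The antipodal `(-n, -m, -k)` of the form `(m, n, k)`. -/
def antipF (f : ℤ × ℤ × ℤ) : ℤ × ℤ × ℤ := (-f.2.1, -f.1, -f.2.2)

/-- A form `(m, n, k)` is primitive if `gcd(m, n, k) = 1`. -/
def IsPrimitiveForm (f : ℤ × ℤ × ℤ) : Prop := Int.gcd f.1 (Int.gcd f.2.1 f.2.2) = 1

/-!
Write `(m, 0, k) = g • (u, 0, w)` with `u`, `w` coprime. The form `(u, 0, w)` is the product of the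
linear forms `x` and `u * x + w * y`, and an equivalence with `(v, 0, -w)` has to exchange the two
isotropic lines. The second column of the change of variables is then `±(-w, u)`, and unimodularity
lets it be completed to an equivalence if and only if `u * v ≡ 1` modulo `w`. Rotating the adjoint
into `(-u, 0, -w)`, supersymmetry of `(u, 0, w)` becomes `u ^ 2 ≡ 1` and `-u ^ 2 ≡ 1` modulo `w`,
which together say `w ∣ 2`, that is, `k ∣ 2 * m`.
-/

/-- A form is supersymmetric if it is `SL(2,ℤ)`-equivalent to its conjugate and to its adjoint.
The property is stated for a form, but depends only on its class. -/
def IsSupersymmetric (f : ℤ × ℤ × ℤ) : Prop := SLEquiv f (conjF f) ∧ SLEquiv f (adjF f)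

namespace SLEquiv

theorem refl (f : ℤ × ℤ × ℤ) : SLEquiv f f := ⟨1, 0, 0, 1, by norm_num, by simp⟩

theorem swap {f : ℤ × ℤ × ℤ} {m n k : ℤ} (h : SLEquiv f (m, n, k)) : SLEquiv f (n, m, -k) := by
  obtain ⟨a, b, c, d, hdet, h⟩ := h
  refine ⟨-b, a, -d, c, by linear_combination hdet, fun x y => ?_⟩
  calc qval (n, m, -k) x y = qval (m, n, k) y (-x) := by simp only [qval]; ring
    _ = qval f (a * y + b * -x) (c * y + d * -x) := h y (-x)
    _ = qval f (-b * x + a * y) (-d * x + c * y) := by ring_nf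

theorem swap_iff {f : ℤ × ℤ × ℤ} {m n k : ℤ} : SLEquiv f (m, n, k) ↔ SLEquiv f (n, m, -k) :=
  ⟨swap, fun h => by simpa only [neg_neg] using h.swap⟩

end SLEquiv

section Scaling

variable {g : ℤ} {f f' : ℤ × ℤ × ℤ}

theorem qval_smul (g : ℤ) (f : ℤ × ℤ × ℤ) (x y : ℤ) : qval (g • f) x y = g * qval f x y := by
  simp only [qval, Prod.smul_fst, Prod.smul_snd, smul_eq_mul]
  ring

theorem conjF_smul (g : ℤ) (f : ℤ × ℤ × ℤ) : conjF (g • f) = g • conjF f := by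
  simp [conjF]

theorem adjF_smul (g : ℤ) (f : ℤ × ℤ × ℤ) : adjF (g • f) = g • adjF f := by
  simp [adjF]

theorem slEquiv_smul_iff (hg : g ≠ 0) : SLEquiv (g • f) (g • f') ↔ SLEquiv f f' := by
  simp only [SLEquiv, qval_smul, mul_right_inj' hg]

theorem isSupersymmetric_smul_iff (hg : g ≠ 0) :
    IsSupersymmetric (g • f) ↔ IsSupersymmetric f := by
  simp only [IsSupersymmetric, conjF_smul, adjF_smul, slEquiv_smul_iff hg]

end Scaling

section Primitive

variable {u v w : ℤ}

theorem slEquiv_neg_of_modEq_one (h : u * v ≡ 1 [ZMOD w]) : SLEquiv (u, 0, w) (v, 0, -w) := by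
  obtain ⟨q, hq⟩ := h.dvd
  refine ⟨v, -w, q, u, by linear_combination -hq, fun x y => ?_⟩
  have linear_factor : u * (v * x + -w * y) + w * (q * x + u * y) = x := by
    linear_combination -x * hq
  calc qval (v, 0, -w) x y = (v * x + -w * y) * x := by simp only [qval]; ring
    _ = (v * x + -w * y) * (u * (v * x + -w * y) + w * (q * x + u * y)) := by rw [linear_factor]
    _ = qval (u, 0, w) (v * x + -w * y) (q * x + u * y) := by simp only [qval]; ring

theorem mul_add_mul_second_column_eq_zero {a b c d : ℤ} (hdet : a * d - b * c = 1)
    (h : ∀ x y, qval (v, 0, -w) x y = qval (u, 0, w) (a * x + b * y) (c * x + d * y)) :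
    u * b + w * d = 0 := by
  have h₁₀ := h 1 0
  have h₀₁ := h 0 1
  have h₁₁ := h 1 1
  simp only [qval] at h₁₀ h₀₁ h₁₁
  have product_eq_zero : b * (u * b + w * d) = 0 := by linear_combination -h₀₁
  -- The sign change of the middle coefficient leaves the line `x = 0` possible only for `w = 0`.
  rcases mul_eq_zero.mp product_eq_zero with rfl | line_eq_zero
  · have two_mul_eq_zero : 2 * w = 0 := by linear_combination h₁₀ + h₀₁ - h₁₁ - w * hdet
    have w_eq_zero : w = 0 := by omega
    simp only [w_eq_zero, mul_zero, zero_mul, add_zero]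
  · exact line_eq_zero

theorem modEq_one_of_slEquiv_neg (huw : IsCoprime u w) (h : SLEquiv (u, 0, w) (v, 0, -w)) :
    u * v ≡ 1 [ZMOD w] := by
  obtain ⟨a, b, c, d, hdet, h⟩ := h
  have hbd : u * b + w * d = 0 := mul_add_mul_second_column_eq_zero hdet h
  -- By unimodularity `t` divides both `u` and `w`, so `t = ±1` and `(b, d) = t • (-w, u)`.
  obtain ⟨t, ht⟩ : ∃ t, t = u * a + w * c := ⟨_, rfl⟩
  have hu : u = t * d := by linear_combination -u * hdet - d * ht - c * hbd
  have hw : w = -(t * b) := by linear_combination -w * hdet + b * ht + a * hbd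
  have hv : v = a * t := by
    have h₁₀ := h 1 0
    simp only [qval] at h₁₀
    linear_combination h₁₀ - a * ht
  have ht_sq : t * t = 1 := Int.isUnit_mul_self <|
    huw.isUnit_of_dvd' ⟨d, hu⟩ ⟨-b, by linear_combination hw⟩
  refine Int.modEq_iff_dvd.mpr ⟨t * c, ?_⟩
  calc 1 - u * v = 1 - t * t * (a * d) := by rw [hu, hv]; ring
    _ = -(t * b) * (t * c) := by linear_combination (-a * d + b * c) * ht_sq - hdet
    _ = w * (t * c) := by rw [← hw]

theorem slEquiv_neg_iff_modEq_one (huw : IsCoprime u w) :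
    SLEquiv (u, 0, w) (v, 0, -w) ↔ u * v ≡ 1 [ZMOD w] :=
  ⟨modEq_one_of_slEquiv_neg huw, slEquiv_neg_of_modEq_one⟩

theorem modEq_one_of_dvd_two (huw : IsCoprime u w) (hw : w ∣ 2) : u ≡ 1 [ZMOD w] := by
  have dvd_mul_pred : w ∣ u * (u - 1) := hw.trans (Int.even_mul_pred_self u).two_dvd
  exact (Int.modEq_iff_dvd.mpr (huw.symm.dvd_of_dvd_mul_left dvd_mul_pred)).symm

theorem modEq_one_and_modEq_one_iff_dvd_two (huw : IsCoprime u w) :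
    (u * u ≡ 1 [ZMOD w] ∧ u * -u ≡ 1 [ZMOD w]) ↔ w ∣ 2 := by
  constructor
  · rintro ⟨hpos, hneg⟩
    simpa [one_add_one_eq_two] using (hpos.add hneg).dvd
  · intro hw
    have hu := modEq_one_of_dvd_two huw hw
    have neg_one_modEq_one : -1 ≡ 1 [ZMOD w] := Int.modEq_iff_dvd.mpr hw
    exact ⟨hu.mul hu, (hu.mul hu.neg).trans neg_one_modEq_one⟩

theorem isSupersymmetric_iff_dvd_two (huw : IsCoprime u w) :
    IsSupersymmetric (u, 0, w) ↔ w ∣ 2 := by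
  have conj_iff : SLEquiv (u, 0, w) (conjF (u, 0, w)) ↔ u * u ≡ 1 [ZMOD w] :=
    slEquiv_neg_iff_modEq_one huw
  have adj_iff : SLEquiv (u, 0, w) (adjF (u, 0, w)) ↔ u * -u ≡ 1 [ZMOD w] :=
    SLEquiv.swap_iff.trans (slEquiv_neg_iff_modEq_one huw)
  rw [IsSupersymmetric, conj_iff, adj_iff, modEq_one_and_modEq_one_iff_dvd_two huw]

end Primitive

theorem statement14_general (m k : ℤ) : IsSupersymmetric (m, 0, k) ↔ k ∣ 2 * m := by
  obtain ⟨u, w, hm, hk, hgcd⟩ := extract_gcd m k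
  have huw : IsCoprime u w := (gcd_isUnit_iff u w).mp hgcd
  obtain hg | hg := eq_or_ne (gcd m k) 0
  · obtain ⟨rfl, rfl⟩ := (gcd_eq_zero_iff m k).mp hg
    exact iff_of_true ⟨SLEquiv.refl _, SLEquiv.refl _⟩ (dvd_zero 0)
  · generalize gcd m k = g at hm hk hg
    subst hm hk
    calc IsSupersymmetric (g * u, 0, g * w)
      _ ↔ IsSupersymmetric (g • (u, 0, w)) := by simp
      _ ↔ w ∣ 2 := (isSupersymmetric_smul_iff hg).trans (isSupersymmetric_iff_dvd_two huw)
      _ ↔ w ∣ 2 * u := ⟨(dvd_mul_of_dvd_left · u), huw.symm.dvd_of_dvd_mul_right⟩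
      _ ↔ g * w ∣ 2 * (g * u) := by rw [mul_left_comm, mul_dvd_mul_iff_left hg]

theorem dvd_two_mul_iff_of_nonneg_of_lt {m k : ℤ} (hm : 0 ≤ m) (hk : m < k) :
    k ∣ 2 * m ↔ m = 0 ∨ (Even k ∧ 2 * m = k) := by
  constructor
  · rintro ⟨q, hq⟩
    have hq_nonneg : 0 ≤ q := by nlinarith
    have hq_lt_two : q < 2 := by nlinarith
    interval_cases q
    · left; omega
    · right; exact ⟨⟨m, by omega⟩, by omega⟩
  · rintro (rfl | ⟨-, rfl⟩)
    · exact dvd_zero k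
    · exact dvd_rfl

/-- For `0 ≤ m < k`, the class of `(m,0,k)` is supersymmetric iff `m = 0`, or `k` is
even and `m = k/2`. -/
theorem statement14 (m k : ℤ) (hm : 0 ≤ m) (hk : m < k) (hkpos : 0 < k) :
    (SLEquiv (m, 0, k) (conjF (m, 0, k)) ∧ SLEquiv (m, 0, k) (adjF (m, 0, k))) ↔
      (m = 0 ∨ (Even k ∧ 2 * m = k)) :=
  (statement14_general m k).trans (dvd_two_mul_iff_of_nonneg_of_lt hm hk)
end

section
/- Let k be a positive integer and m an integer with 0≤m<k. The class of the form (m,0,k) is never antisymmetric; that is, if (m,0,k) is SL(2,ℤ)-equivalent to its antipodal form (0,−m,−k), then it is also SL(2,ℤ)-equivalent to its conjugate (m,0,−k) and to its adjoint (0,−m,k). -/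
/-!
The form `(m, 0, k)` factors as `x (m x + k y)`. If `k ≠ 0`, an equivalence with the antipodal form
`-y (m y + k x)` must carry the factor `x` to the factor `y` up to sign, and this forces `k ∣ 2 m`;
if `k = 0`, it forces `m = 0`. Hence `(m, 0, k)` is a multiple of `x (r x + y)` or of
`x (e x + 2 y)` with `e` odd. Exchanging the two factors by a matrix of determinant `1` then gives
the conjugate form. The adjoint is the conjugate of the antipodal.
-/

theorem qval_conjF (f : ℤ × ℤ × ℤ) (x y : ℤ) : qval (conjF f) x y = qval f x (-y) := by
  simp only [qval, conjF]
  ring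

theorem conjF_antipF (f : ℤ × ℤ × ℤ) : conjF (antipF f) = adjF f := by
  simp only [conjF, antipF, adjF, neg_neg]

namespace SLEquiv

variable {f g h : ℤ × ℤ × ℤ}

theorem trans (hfg : SLEquiv f g) (hgh : SLEquiv g h) : SLEquiv f h := by
  obtain ⟨a, b, c, d, hdet, hval⟩ := hfg
  obtain ⟨a', b', c', d', hdet', hval'⟩ := hgh
  refine ⟨a * a' + b * c', a * b' + b * d', c * a' + d * c', c * b' + d * d', ?_, fun x y => ?_⟩
  · linear_combination (a' * d' - b' * c') * hdet + hdet'
  · rw [hval', hval]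
    congr 1 <;> ring

theorem map_conjF (hfg : SLEquiv f g) : SLEquiv (conjF f) (conjF g) := by
  obtain ⟨a, b, c, d, hdet, hval⟩ := hfg
  refine ⟨a, -b, -c, d, by linear_combination hdet, fun x y => ?_⟩
  rw [qval_conjF, qval_conjF, hval]
  congr 1 <;> ring

theorem adjF_of_conjF_of_antipF (hconj : SLEquiv f (conjF f))
    (hant : SLEquiv f (antipF f)) : SLEquiv f (adjF f) :=
  conjF_antipF f ▸ hconj.trans hant.map_conjF

theorem exists_coeff_eq (hfg : SLEquiv f g) :
    ∃ a b c d : ℤ, a * d - b * c = 1 ∧ g.1 = qval f a c ∧ g.2.1 = qval f b d ∧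
      g.2.2 = 2 * f.1 * a * b + 2 * f.2.1 * c * d + f.2.2 * (a * d + b * c) := by
  obtain ⟨a, b, c, d, hdet, hval⟩ := hfg
  have h10 := hval 1 0
  have h01 := hval 0 1
  have h11 := hval 1 1
  simp only [qval] at h10 h01 h11 ⊢
  refine ⟨a, b, c, d, hdet, ?_, ?_, ?_⟩
  · linear_combination h10
  · linear_combination h01
  · linear_combination h11 - h10 - h01

end SLEquiv

theorem dvd_two_mul_of_slEquiv_antipF {m k : ℤ} (hant : SLEquiv (m, 0, k) (antipF (m, 0, k))) :
    k ∣ 2 * m := by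
  obtain ⟨a, b, c, d, hdet, hx, hy, hxy⟩ := hant.exists_coeff_eq
  simp only [antipF, qval] at hx hy hxy
  have hfactor : a * (m * a + k * c) = 0 := by linear_combination -hx
  rcases mul_eq_zero.mp hfactor with ha | hline
  · have hb : IsUnit b := .of_mul_eq_one (-c) (by linear_combination hdet - d * ha)
    exact ⟨-(b * d), by linear_combination -hy - m * Int.isUnit_sq hb⟩
  · have hk : k = 0 := by
      have : 2 * k = 0 := by linear_combination -hxy - k * hdet - 2 * b * hline
      omega
    have hm : m = 0 := by
      have : m * (b ^ 2 + 1) = 0 := by linear_combination -hy - b * d * hk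
      exact (mul_eq_zero.mp this).resolve_right (by positivity)
    simp only [hk, hm, mul_zero, dvd_refl]

theorem slEquiv_conjF_of_dvd_sq_sub_one (g : ℤ) {p q : ℤ} (hq : q ∣ p ^ 2 - 1) :
    SLEquiv (g * p, 0, g * q) (conjF (g * p, 0, g * q)) := by
  obtain ⟨s, hs⟩ := hq
  -- The witness exchanges linear factors: `x ↦ p x - q y` and `p x + q y ↦ x`.
  refine ⟨p, -q, -s, p, by linear_combination hs, fun x y => ?_⟩
  simp only [qval, conjF]
  linear_combination -(g * x * (p * x - q * y)) * hs

theorem slEquiv_conjF_of_dvd_two_mul {m k : ℤ} (hk : k ∣ 2 * m) :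
    SLEquiv (m, 0, k) (conjF (m, 0, k)) := by
  obtain ⟨e, he⟩ := hk
  rcases Int.even_or_odd e with ⟨r, hr⟩ | hodd
  · have hm : m = k * r := by
      have : 2 * m = 2 * (k * r) := by linear_combination he + k * hr
      omega
    simpa only [hm, mul_one] using slEquiv_conjF_of_dvd_sq_sub_one k (one_dvd (r ^ 2 - 1))
  · have hke : Even (k * e) := he ▸ even_two_mul m
    obtain ⟨j, hj⟩ := (Int.even_mul.mp hke).resolve_right (Int.not_even_iff_odd.mpr hodd)
    have hk : k = j * 2 := by omega
    have hm : m = j * e := by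
      have : 2 * m = 2 * (j * e) := by linear_combination he + e * hj
      omega
    rw [hm, hk]
    exact slEquiv_conjF_of_dvd_sq_sub_one j (hodd.pow.sub_odd odd_one).two_dvd

theorem statement17_general (m k : ℤ) (hant : SLEquiv (m, 0, k) (antipF (m, 0, k))) :
    SLEquiv (m, 0, k) (conjF (m, 0, k)) ∧ SLEquiv (m, 0, k) (adjF (m, 0, k)) :=
  have hconj := slEquiv_conjF_of_dvd_two_mul (dvd_two_mul_of_slEquiv_antipF hant)
  ⟨hconj, hconj.adjF_of_conjF_of_antipF hant⟩

/-- For `0 ≤ m < k`, the class of `(m,0,k)` cannot be antisymmetric: if `(m,0,k)` is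
equivalent to its antipodal, then it is also equivalent to its conjugate and to its
adjoint. -/
theorem statement17 (m k : ℤ) (hm : 0 ≤ m) (hk : m < k) (hkpos : 0 < k)
    (hant : SLEquiv (m, 0, k) (antipF (m, 0, k))) :
    SLEquiv (m, 0, k) (conjF (m, 0, k)) ∧ SLEquiv (m, 0, k) (adjF (m, 0, k)) :=
  statement17_general m k hant
end

section
/- Let h=(m,n,k) be a reduced integer binary quadratic form (m>0, n>0, k<0, m+n<−k) with discriminant Δ=k²−4mn>0 not a perfect square. Then the minus continued fraction expansion of ξ⁺(h)=(−k+√Δ)/(2m) is purely periodic; if (c_1,…,c_t) denotes its period, then the number of reduced forms in the SL(2,ℤ)-equivalence class of h is exactly t, and the values ξ⁺(h') as h' ranges over the reduced forms of the class are exactly the numbers whose minus continued fraction is purely periodic with period a cyclic permutation of (c_1,…,c_t). -/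
/-- Iterates of the map underlying the minus (modular) continued fraction. -/
noncomputable def minusIter (ξ : ℝ) : ℕ → ℝ
  | 0 => ξ
  | n + 1 => 1 / ((⌈minusIter ξ n⌉ : ℝ) - minusIter ξ n)

/-- The `n`-th partial quotient of the minus (modular) continued fraction of `ξ`,
so that `ξ = b₀ - 1/(b₁ - 1/(b₂ - ⋯))`. -/
noncomputable def mcfTerm (ξ : ℝ) (n : ℕ) : ℤ := ⌈minusIter ξ n⌉

/-- `s` is the period of the purely periodic minus continued fraction expansion of `ξ`. -/
def IsPurelyPeriodicMCF (s : List ℤ) (ξ : ℝ) : Prop :=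
  s ≠ [] ∧
  (∀ j : ℕ, mcfTerm ξ j = s.getD (j % s.length) 0) ∧
  (∀ P : ℕ, 1 ≤ P → (∀ j : ℕ, mcfTerm ξ (j + P) = mcfTerm ξ j) → s.length ≤ P)

/-- A form `(m, n, k)` is reduced iff `m > 0`, `n > 0`, `k < 0` and `m + n < -k`. -/
def ReducedForm (f : ℤ × ℤ × ℤ) : Prop :=
  0 < f.1 ∧ 0 < f.2.1 ∧ f.2.2 < 0 ∧ f.1 + f.2.1 < -f.2.2

/-!
A form of discriminant `D > 0` is reduced exactly when its leading coefficient is positive and its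
roots satisfy `0 < ξ⁻ < 1 < ξ⁺`. The shift `x ↦ 1 / (⌈x⌉ - x)` of the minus continued fraction is
induced by a change of variables of determinant `1`, so it permutes the finitely many numbers `ξ⁺`
of the reduced forms of discriminant `D`; injectivity is Galois' argument with the conjugate root.
Hence `ξ⁺` is a periodic point of the shift, that is, its expansion is purely periodic. Since
`SL(2, ℤ)` is generated by `x ↦ x + 1` and `x ↦ -1 / x`, and both preserve the tail of an expansion,
equivalent forms have roots with a common tail; for periodic points this means that they lie in the
same orbit of the shift. Finally, a real number is determined by its partial quotients, so moving
along the orbit is the same as rotating the period.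
-/

open Function ModularGroup Set
open scoped MatrixGroups

section Orbits

variable {α : Type*} {f : α → α} {s : Set α} {x y : α}

lemma subset_periodicPts_of_injOn (hs : s.Finite) (hmaps : MapsTo f s s) (hinj : InjOn f s) :
    s ⊆ periodicPts f := by
  intro x hx
  have := hs.to_subtype
  have hsemi : Semiconj Subtype.val (hmaps.restrict f s s) f := fun _ ↦ rfl
  exact hsemi.mapsTo_periodicPts <|
    (hmaps.restrict_inj.2 hinj).mem_periodicPts (⟨x, hx⟩ : s)

lemma ncard_range_iterate (hx : x ∈ periodicPts f) :
    (range (f^[·] x)).ncard = minimalPeriod f x := by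
  have himage : range (f^[·] x) = (f^[·] x) '' Iio (minimalPeriod f x) := by
    refine subset_antisymm ?_ (image_subset_range _ _)
    rintro _ ⟨j, rfl⟩
    exact ⟨j % minimalPeriod f x, Nat.mod_lt _ (minimalPeriod_pos_of_mem_periodicPts hx),
      iterate_mod_minimalPeriod_eq⟩
  rw [himage, iterate_injOn_Iio_minimalPeriod.ncard_image, ncard_Iio_nat]

lemma mem_range_iterate_of_iterate_eq (hx : x ∈ periodicPts f) {i j : ℕ}
    (h : f^[i] x = f^[j] y) : x ∈ range (f^[·] y) := by
  obtain ⟨p, hp, hpx⟩ := hx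
  have hle : i ≤ p * i := Nat.le_mul_of_pos_left i hp
  refine ⟨p * i - i + j, ?_⟩
  calc f^[p * i - i + j] y = f^[p * i - i + i] x := by
        rw [iterate_add_apply, ← h, ← iterate_add_apply]
    _ = x := by rw [Nat.sub_add_cancel hle]; exact hpx.mul_const i

end Orbits

section MinusContinuedFraction

variable {x y : ℝ} {s : List ℤ}

/-- The shift `x ↦ 1 / (⌈x⌉ - x)` of the minus continued fraction, which removes the leading partial
quotient. At integers division by zero gives the value `0`, which is a fixed point. -/
noncomputable def minusStep (x : ℝ) : ℝ := ((⌈x⌉ : ℝ) - x)⁻¹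

lemma minusIter_eq_iterate (x : ℝ) (j : ℕ) : minusIter x j = minusStep^[j] x := by
  induction j with
  | zero => rfl
  | succ j ih => rw [iterate_succ_apply', ← ih, minusStep, minusIter, one_div]

lemma mcfTerm_eq_ceil_iterate (x : ℝ) (j : ℕ) : mcfTerm x j = ⌈minusStep^[j] x⌉ := by
  rw [mcfTerm, minusIter_eq_iterate]

lemma mcfTerm_iterate (x : ℝ) (i j : ℕ) : mcfTerm (minusStep^[i] x) j = mcfTerm x (i + j) := by
  rw [mcfTerm_eq_ceil_iterate, mcfTerm_eq_ceil_iterate, ← iterate_add_apply, add_comm]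

lemma minusStep_eq_zero_or_one_lt (x : ℝ) : minusStep x = 0 ∨ 1 < minusStep x := by
  rcases (Int.le_ceil x).eq_or_lt with hx | hx
  · left
    rw [minusStep, ← hx, sub_self, inv_zero]
  · right
    rw [minusStep]
    exact (one_lt_inv₀ (sub_pos.2 hx)).2 (by linarith [Int.ceil_lt_add_one x])

lemma eq_ceil_sub_inv_minusStep (x : ℝ) : x = ⌈x⌉ - (minusStep x)⁻¹ := by
  rw [minusStep, inv_inv, sub_sub_cancel]

lemma dist_mul_one_add_dist_le_dist_minusStep (hceil : ⌈x⌉ = ⌈y⌉)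
    (hceil' : ⌈minusStep x⌉ = ⌈minusStep y⌉) :
    dist x y * (1 + dist x y) ≤ dist (minusStep x) (minusStep y) := by
  have hx := eq_ceil_sub_inv_minusStep x
  have hy := eq_ceil_sub_inv_minusStep y
  rw [hceil] at hx
  rcases minusStep_eq_zero_or_one_lt x with hu | hu <;>
    rcases minusStep_eq_zero_or_one_lt y with hv | hv
  · rw [hu] at hx
    rw [hv] at hy
    rw [hx.trans hy.symm, dist_self, zero_mul]
    exact dist_nonneg
  · have := Int.lt_ceil.2 (by exact_mod_cast hv : ((1 : ℤ) : ℝ) < minusStep y)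
    simp [← hceil', hu] at this
  · have := Int.lt_ceil.2 (by exact_mod_cast hu : ((1 : ℤ) : ℝ) < minusStep x)
    simp [hceil', hv] at this
  set u := minusStep x
  set v := minusStep y
  have hdist : dist u v = dist x y * (u * v) := by
    have hsub : u - v = (x - y) * (u * v) := by
      have hdiff : x - y = v⁻¹ - u⁻¹ := by linarith
      rw [hdiff]
      field_simp
    rw [Real.dist_eq, hsub, abs_mul, abs_of_pos (by positivity : 0 < u * v), Real.dist_eq]
  have hexpand : dist x y ≤ dist u v := by
    rw [hdist]
    exact le_mul_of_one_le_right dist_nonneg (by nlinarith)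
  have hprod : 1 + dist u v ≤ u * v := by
    rw [Real.dist_eq]
    rcases abs_cases (u - v) with ⟨h, -⟩ | ⟨h, -⟩ <;> nlinarith
  rw [hdist]
  gcongr
  linarith

-- If `x` and `y` have the same partial quotients, each shift increases their distance by at least
-- `dist x y ^ 2`, although it stays below `1`.
theorem mcfTerm_injective : Injective mcfTerm := by
  intro x y hxy
  by_contra hne
  have hδ : 0 < dist x y := dist_pos.2 hne
  have hceil (j : ℕ) : ⌈minusStep^[j] x⌉ = ⌈minusStep^[j] y⌉ := by
    simpa only [mcfTerm_eq_ceil_iterate] using congrFun hxy j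
  have hgrowth (j : ℕ) :
      dist x y * (1 + j * dist x y) ≤ dist (minusStep^[j] x) (minusStep^[j] y) := by
    induction j with
    | zero => simp
    | succ j ih =>
      have hstep := dist_mul_one_add_dist_le_dist_minusStep (hceil j)
        (by simpa only [iterate_succ_apply'] using hceil (j + 1))
      rw [iterate_succ_apply', iterate_succ_apply']
      have hle : dist x y ≤ dist (minusStep^[j] x) (minusStep^[j] y) :=
        le_trans (le_mul_of_one_le_right hδ.le (by simp [hδ.le, mul_nonneg])) ih
      push_cast
      nlinarith
  obtain ⟨j, hj⟩ := exists_nat_gt ((dist x y * dist x y)⁻¹)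
  have hlarge : 1 < j * (dist x y * dist x y) := (inv_lt_iff_one_lt_mul₀ (by positivity)).1 hj
  have hsmall : dist (minusStep^[j] x) (minusStep^[j] y) < 1 := by
    have hx := Int.le_ceil (minusStep^[j] x)
    have hx' := Int.ceil_lt_add_one (minusStep^[j] x)
    rw [hceil j] at hx hx'
    rw [Real.dist_eq, abs_lt]
    constructor <;> linarith [Int.le_ceil (minusStep^[j] y), Int.ceil_lt_add_one (minusStep^[j] y)]
  nlinarith [hgrowth j]

lemma mcfTerm_add_eq_iff_isPeriodicPt {p : ℕ} :
    (∀ j, mcfTerm x (j + p) = mcfTerm x j) ↔ IsPeriodicPt minusStep p x := by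
  simp only [IsPeriodicPt, IsFixedPt, ← mcfTerm_injective.eq_iff, funext_iff, mcfTerm_iterate,
    add_comm p]

lemma isPurelyPeriodicMCF_iff : IsPurelyPeriodicMCF s x ↔
    s ≠ [] ∧ (∀ j, mcfTerm x j = s.getD (j % s.length) 0) ∧
      minimalPeriod minusStep x = s.length := by
  refine and_congr_right fun hs ↦ and_congr_right fun hterm ↦ ?_
  have hpos : 0 < s.length := List.length_pos_iff.2 hs
  have hper : IsPeriodicPt minusStep s.length x :=
    mcfTerm_add_eq_iff_isPeriodicPt.1 fun j ↦ by rw [hterm, hterm, Nat.add_mod_right]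
  simp only [mcfTerm_add_eq_iff_isPeriodicPt]
  constructor
  · intro hmin
    exact (hper.minimalPeriod_le hpos).antisymm
      (hmin _ (hper.minimalPeriod_pos hpos) (isPeriodicPt_minimalPeriod _ _))
  · intro hlen p hp hpx
    exact hlen ▸ hpx.minimalPeriod_le hp

theorem exists_isPurelyPeriodicMCF_iff :
    (∃ s, IsPurelyPeriodicMCF s x) ↔ x ∈ periodicPts minusStep := by
  simp only [isPurelyPeriodicMCF_iff, ← minimalPeriod_pos_iff_mem_periodicPts]
  constructor
  · rintro ⟨s, hs, -, hlen⟩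
    exact hlen ▸ List.length_pos_iff.2 hs
  · intro hpos
    refine ⟨(List.range (minimalPeriod minusStep x)).map (mcfTerm x), ?_, fun j ↦ ?_, by simp⟩
    · simpa using hpos.ne'
    · have hmod : mcfTerm x (j % minimalPeriod minusStep x) = mcfTerm x j := by
        rw [mcfTerm_eq_ceil_iterate, mcfTerm_eq_ceil_iterate, iterate_mod_minimalPeriod_eq]
      simp [List.getD_eq_getElem?_getD, Nat.mod_lt _ hpos, hmod]

namespace IsPurelyPeriodicMCF

lemma eq (hx : IsPurelyPeriodicMCF s x) (hy : IsPurelyPeriodicMCF s y) : x = y :=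
  mcfTerm_injective <| funext fun j ↦ (hx.2.1 j).trans (hy.2.1 j).symm

lemma minimalPeriod_eq (hx : IsPurelyPeriodicMCF s x) : minimalPeriod minusStep x = s.length :=
  (isPurelyPeriodicMCF_iff.1 hx).2.2

lemma rotate (hx : IsPurelyPeriodicMCF s x) (i : ℕ) :
    IsPurelyPeriodicMCF (s.rotate i) (minusStep^[i] x) := by
  have hper := exists_isPurelyPeriodicMCF_iff.1 ⟨s, hx⟩
  obtain ⟨hs, hterm, hlen⟩ := isPurelyPeriodicMCF_iff.1 hx
  refine isPurelyPeriodicMCF_iff.2 ⟨by simpa using hs, fun j ↦ ?_, ?_⟩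
  · have hj : j % s.length < s.length := Nat.mod_lt _ (List.length_pos_iff.2 hs)
    rw [mcfTerm_iterate, hterm, List.length_rotate, List.getD_eq_getElem?_getD,
      List.getD_eq_getElem?_getD, List.getElem?_rotate hj, Nat.mod_add_mod, add_comm]
  · rw [minimalPeriod_apply_iterate hper, List.length_rotate, hlen]

theorem setOf_isRotated_eq_range_iterate (hx : IsPurelyPeriodicMCF s x) :
    {y | ∃ t, s.IsRotated t ∧ IsPurelyPeriodicMCF t y} = range (minusStep^[·] x) := by
  ext y
  constructor
  · rintro ⟨_, ⟨i, rfl⟩, hy⟩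
    exact ⟨i, (hx.rotate i).eq hy⟩
  · rintro ⟨i, rfl⟩
    exact ⟨s.rotate i, ⟨i, rfl⟩, hx.rotate i⟩

end IsPurelyPeriodicMCF

end MinusContinuedFraction

section TailEquivalence

/-- Two real numbers are tail equivalent if some tails of their minus continued fractions agree.
The tails are compared as real numbers, i.e. as iterates of `minusStep`. -/
def TailEq (x y : ℝ) : Prop := ∃ i j, minusStep^[i] x = minusStep^[j] y

namespace TailEq

variable {x y z : ℝ}

lemma refl (x : ℝ) : TailEq x x := ⟨0, 0, rfl⟩

lemma symm : TailEq x y → TailEq y x := fun ⟨i, j, h⟩ ↦ ⟨j, i, h.symm⟩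

lemma trans : TailEq x y → TailEq y z → TailEq x z := by
  rintro ⟨i, j, hxy⟩ ⟨k, l, hyz⟩
  refine ⟨k + i, j + l, ?_⟩
  rw [iterate_add_apply, hxy, iterate_add_apply, ← hyz, ← iterate_add_apply, ← iterate_add_apply,
    add_comm]

end TailEq

lemma tailEq_minusStep (x : ℝ) : TailEq (minusStep x) x := ⟨0, 1, rfl⟩

lemma tailEq_sub_intCast (x : ℝ) (n : ℤ) : TailEq (x - n) x := by
  refine ⟨1, 1, ?_⟩
  simp only [iterate_one, minusStep, Int.ceil_sub_intCast]
  push_cast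
  congr 1
  ring

lemma tailEq_neg_inv_of_one_lt {x : ℝ} (hx : 1 < x) : TailEq (-x⁻¹) x := by
  have hceil : ⌈-x⁻¹⌉ = 0 := by
    have := inv_lt_one_of_one_lt₀ hx
    have : 0 < x⁻¹ := by positivity
    rw [Int.ceil_eq_zero_iff]
    constructor <;> linarith
  refine ⟨1, 0, ?_⟩
  simp [minusStep, hceil]

-- For `0 < x < 1` the shift of `x` is `w + 1` with `w⁻¹ = x⁻¹ - 1`, so the claim for `x` follows
-- from the claim for `w`, whose inverse is smaller.
lemma tailEq_neg_inv_of_pos {x : ℝ} (hx : 0 < x) : TailEq (-x⁻¹) x := by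
  obtain ⟨N, hN⟩ := exists_nat_ge x⁻¹
  induction N generalizing x with
  | zero => exact absurd (inv_pos.2 hx) (not_lt.2 (by simpa using hN))
  | succ N ih =>
    rcases lt_trichotomy x 1 with hlt | rfl | hgt
    · have hceil : ⌈x⌉ = 1 := Int.ceil_eq_iff.2 (by push_cast; constructor <;> linarith)
      set w := minusStep x - (1 : ℤ) with hw
      have hwx : w = x / (1 - x) := by
        rw [hw, minusStep, hceil]
        push_cast
        field_simp [(sub_pos.2 hlt).ne']
        ring
      have hwinv : w⁻¹ = x⁻¹ - 1 := by
        rw [hwx, inv_div, sub_div, div_self hx.ne', one_div]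
      have hneg : TailEq (-x⁻¹) (-w⁻¹) := by
        have := (tailEq_sub_intCast (-x⁻¹) (-1)).symm
        rwa [Int.cast_neg, Int.cast_one, sub_neg_eq_add, neg_add_eq_sub, ← neg_sub, ← hwinv] at this
      have hIH : TailEq (-w⁻¹) w := by
        refine ih (by rw [hwx]; exact div_pos hx (sub_pos.2 hlt)) ?_
        push_cast at hN
        linarith
      exact hneg.trans <| hIH.trans <| (tailEq_sub_intCast _ 1).trans (tailEq_minusStep x)
    · convert tailEq_sub_intCast 1 2 using 1
      norm_num
    · exact tailEq_neg_inv_of_one_lt hgt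

theorem tailEq_neg_inv (x : ℝ) : TailEq (-x⁻¹) x := by
  rcases lt_trichotomy x 0 with hneg | rfl | hpos
  · have := tailEq_neg_inv_of_pos (neg_pos.2 (inv_lt_zero.2 hneg))
    rw [inv_neg, inv_inv, neg_neg] at this
    exact this.symm
  · simpa using TailEq.refl 0
  · exact tailEq_neg_inv_of_pos hpos

end TailEquivalence

section Roots

variable {f g : ℤ × ℤ × ℤ}

lemma formDisc_neg (f : ℤ × ℤ × ℤ) : formDisc (-f) = formDisc f := by
  simp [formDisc]

lemma xiPlus_neg (f : ℤ × ℤ × ℤ) : xiPlus (-f) = xiMinus f := by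
  rw [xiPlus, xiMinus, formDisc_neg, ← neg_div_neg_eq]
  push_cast [Prod.fst_neg, Prod.snd_neg]
  ring_nf

lemma two_mul_fst_mul_xiPlus (hf : f.1 ≠ 0) :
    2 * f.1 * xiPlus f = -f.2.2 + √(formDisc f : ℝ) := by
  rw [xiPlus, mul_div_cancel₀]
  positivity

lemma fst_mul_xiPlus_add_xiMinus (hf : f.1 ≠ 0) : f.1 * (xiPlus f + xiMinus f) = -f.2.2 := by
  rw [xiPlus, xiMinus]
  field_simp
  ring

lemma fst_mul_xiPlus_mul_xiMinus (hf : f.1 ≠ 0) (hdisc : 0 ≤ formDisc f) :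
    f.1 * (xiPlus f * xiMinus f) = f.2.1 := by
  have hsq : √(formDisc f : ℝ) ^ 2 = f.2.2 ^ 2 - 4 * f.1 * f.2.1 := by
    rw [Real.sq_sqrt (by exact_mod_cast hdisc), formDisc]
    push_cast
    ring
  rw [xiPlus, xiMinus]
  field_simp
  linear_combination -hsq

lemma fst_mul_sub_xiPlus_mul_sub_xiMinus (hf : f.1 ≠ 0) (hdisc : 0 ≤ formDisc f) (t : ℝ) :
    f.1 * ((t - xiPlus f) * (t - xiMinus f)) = f.1 * t ^ 2 + f.2.2 * t + f.2.1 := by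
  linear_combination -t * fst_mul_xiPlus_add_xiMinus hf + fst_mul_xiPlus_mul_xiMinus hf hdisc

lemma ReducedForm.formDisc_pos (hf : ReducedForm f) : 0 < formDisc f := by
  obtain ⟨hm, hn, -, hsum⟩ := hf
  rw [formDisc]
  nlinarith [sq_nonneg (f.1 - f.2.1)]

theorem reducedForm_iff (hdisc : 0 < formDisc f) :
    ReducedForm f ↔ 0 < f.1 ∧ 0 < xiMinus f ∧ xiMinus f < 1 ∧ 1 < xiPlus f := by
  refine and_congr_right fun hm ↦ ?_
  have hmR : (0 : ℝ) < f.1 := by exact_mod_cast hm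
  have hadd := fst_mul_xiPlus_add_xiMinus hm.ne'
  have hmul := fst_mul_xiPlus_mul_xiMinus hm.ne' hdisc.le
  have hone := fst_mul_sub_xiPlus_mul_sub_xiMinus hm.ne' hdisc.le 1
  have hlt : xiMinus f < xiPlus f := by
    have : 0 < √(formDisc f : ℝ) := Real.sqrt_pos.2 (by exact_mod_cast hdisc)
    rw [xiPlus, xiMinus]
    gcongr
    linarith
  constructor
  · rintro ⟨hn, hk, hsum⟩
    have hprod : 0 < xiPlus f * xiMinus f :=
      pos_of_mul_pos_right (by rw [hmul]; exact_mod_cast hn) hmR.le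
    have hadd' : 0 < xiPlus f + xiMinus f :=
      pos_of_mul_pos_right (by rw [hadd]; exact_mod_cast neg_pos.2 hk) hmR.le
    have hone' : (1 - xiPlus f) * (1 - xiMinus f) < 0 := by
      have hneg : f.1 * ((1 - xiPlus f) * (1 - xiMinus f)) < 0 := by
        rw [hone, one_pow, mul_one, mul_one]
        exact_mod_cast (by linarith : f.1 + f.2.2 + f.2.1 < 0)
      exact neg_of_mul_neg_right hneg hmR.le
    refine ⟨?_, ?_, ?_⟩ <;> nlinarith
  · rintro ⟨hpos, hlt_one, hone_lt⟩
    have hn : (0 : ℝ) < f.2.1 := by rw [← hmul]; positivity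
    have hk : (0 : ℝ) < -f.2.2 := by rw [← hadd]; positivity
    have hsum : (f.1 : ℝ) + f.2.2 + f.2.1 < 0 := by
      have : (1 - xiPlus f) * (1 - xiMinus f) < 0 :=
        mul_neg_of_neg_of_pos (by linarith) (by linarith)
      linarith [mul_neg_of_pos_of_neg hmR this]
    norm_cast at hn hk hsum
    exact ⟨hn, by linarith, by linarith⟩

lemma fst_ne_zero_of_irrational_sqrt (hf : Irrational √(formDisc f : ℝ)) : f.1 ≠ 0 := by
  intro h
  refine (irrational_sqrt_intCast_iff.1 hf).1 ⟨f.2.2, ?_⟩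
  rw [formDisc, h]
  ring

lemma snd_fst_ne_zero_of_irrational_sqrt (hf : Irrational √(formDisc f : ℝ)) : f.2.1 ≠ 0 := by
  intro h
  refine (irrational_sqrt_intCast_iff.1 hf).1 ⟨f.2.2, ?_⟩
  rw [formDisc, h]
  ring

lemma irrational_xiPlus (hf : Irrational √(formDisc f : ℝ)) : Irrational (xiPlus f) := by
  have hm := fst_ne_zero_of_irrational_sqrt hf
  have h := (hf.intCast_add (-f.2.2)).div_intCast (mul_ne_zero two_ne_zero hm)
  rw [xiPlus]
  exact_mod_cast h

theorem injOn_xiPlus {D : ℤ} (hD : Irrational √(D : ℝ)) : InjOn xiPlus {f | formDisc f = D} := by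
  rintro f rfl g hg hfg
  have hdisc : formDisc g = formDisc f := hg
  have hf₀ := fst_ne_zero_of_irrational_sqrt hD
  have hlin : 2 * (f.1 - g.1) * xiPlus g + (f.2.2 - g.2.2) = 0 := by
    have hf' := two_mul_fst_mul_xiPlus hf₀
    have hg' := two_mul_fst_mul_xiPlus (fst_ne_zero_of_irrational_sqrt (hdisc.symm ▸ hD))
    rw [hdisc] at hg'
    rw [hfg] at hf'
    linarith
  have hm : f.1 = g.1 := by
    by_contra hne
    have hne' : 2 * (f.1 - g.1) ≠ 0 := mul_ne_zero two_ne_zero (sub_ne_zero.2 hne)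
    have hirr := ((hfg ▸ irrational_xiPlus hD).intCast_mul hne').add_intCast (f.2.2 - g.2.2)
    exact hirr.ne_zero (by exact_mod_cast hlin)
  have hk : f.2.2 = g.2.2 := by
    rw [hm, sub_self, mul_zero, zero_mul, zero_add, sub_eq_zero] at hlin
    exact_mod_cast hlin
  have hn : f.2.1 = g.2.1 := by
    rw [formDisc, formDisc, hm, hk] at hdisc
    exact mul_left_cancel₀ (hm ▸ hf₀) (by linarith : g.1 * f.2.1 = g.1 * g.2.1)
  exact Prod.ext hm (Prod.ext hn hk)

end Roots

section Substitution

variable {f g : ℤ × ℤ × ℤ}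

/-- The form `f ∘ γ` obtained from `f` by the change of variables `γ ∈ SL(2, ℤ)`. This is a right
action, see `substForm_mul`. -/
def substForm (γ : SL(2, ℤ)) (f : ℤ × ℤ × ℤ) : ℤ × ℤ × ℤ :=
  (qval f (γ 0 0) (γ 1 0), qval f (γ 0 1) (γ 1 1),
    2 * f.1 * γ 0 0 * γ 0 1 + 2 * f.2.1 * γ 1 0 * γ 1 1 + f.2.2 * (γ 0 0 * γ 1 1 + γ 0 1 * γ 1 0))

lemma qval_substForm (γ : SL(2, ℤ)) (f : ℤ × ℤ × ℤ) (x y : ℤ) :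
    qval (substForm γ f) x y = qval f (γ 0 0 * x + γ 0 1 * y) (γ 1 0 * x + γ 1 1 * y) := by
  simp only [qval, substForm]
  ring

lemma eq_of_qval_eq (h : ∀ x y, qval f x y = qval g x y) : f = g := by
  have h₁₀ := h 1 0
  have h₀₁ := h 0 1
  have h₁₁ := h 1 1
  simp only [qval] at h₁₀ h₀₁ h₁₁
  exact Prod.ext (by linarith) (Prod.ext (by linarith) (by linarith))

lemma slEquiv_iff_exists_substForm_eq : SLEquiv f g ↔ ∃ γ : SL(2, ℤ), substForm γ f = g := by
  constructor
  · rintro ⟨a, b, c, d, hdet, h⟩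
    let γ : SL(2, ℤ) := ⟨!![a, b; c, d], by rw [Matrix.det_fin_two_of, hdet]⟩
    exact ⟨γ, eq_of_qval_eq fun x y ↦ (qval_substForm γ f x y).trans (h x y).symm⟩
  · rintro ⟨γ, rfl⟩
    refine ⟨γ 0 0, γ 0 1, γ 1 0, γ 1 1, ?_, qval_substForm γ f⟩
    rw [← Matrix.det_fin_two, γ.det_coe]

lemma substForm_one (f : ℤ × ℤ × ℤ) : substForm 1 f = f :=
  eq_of_qval_eq fun x y ↦ by simp [qval_substForm]

lemma substForm_mul (γ δ : SL(2, ℤ)) (f : ℤ × ℤ × ℤ) :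
    substForm (γ * δ) f = substForm δ (substForm γ f) := by
  refine eq_of_qval_eq fun x y ↦ ?_
  simp only [qval_substForm, Matrix.SpecialLinearGroup.coe_mul, Matrix.mul_apply, Fin.sum_univ_two]
  congr 1 <;> ring

lemma substForm_neg (γ : SL(2, ℤ)) (f : ℤ × ℤ × ℤ) : substForm γ (-f) = -substForm γ f := by
  ext <;> simp only [substForm, qval, Prod.fst_neg, Prod.snd_neg] <;> ring

lemma formDisc_substForm (γ : SL(2, ℤ)) (f : ℤ × ℤ × ℤ) :
    formDisc (substForm γ f) = formDisc f := by
  have hdet : γ 0 0 * γ 1 1 - γ 0 1 * γ 1 0 = 1 := by rw [← Matrix.det_fin_two, γ.det_coe]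
  simp only [formDisc, substForm, qval]
  linear_combination (f.2.2 ^ 2 - 4 * f.1 * f.2.1) *
    (γ 0 0 * γ 1 1 - γ 0 1 * γ 1 0 + 1) * hdet

lemma SLEquiv.formDisc_eq (h : SLEquiv f g) : formDisc g = formDisc f := by
  obtain ⟨γ, rfl⟩ := slEquiv_iff_exists_substForm_eq.1 h
  exact formDisc_substForm γ f

lemma SLEquiv.trans_substForm (h : SLEquiv f g) (γ : SL(2, ℤ)) : SLEquiv f (substForm γ g) := by
  obtain ⟨δ, rfl⟩ := slEquiv_iff_exists_substForm_eq.1 h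
  exact slEquiv_iff_exists_substForm_eq.2 ⟨δ * γ, substForm_mul δ γ f⟩

lemma substForm_T_zpow (n : ℤ) (f : ℤ × ℤ × ℤ) :
    substForm (T ^ n) f = (f.1, f.1 * n ^ 2 + f.2.1 + f.2.2 * n, 2 * f.1 * n + f.2.2) := by
  simp [substForm, qval, coe_T_zpow, -map_zpow]

lemma substForm_S (f : ℤ × ℤ × ℤ) : substForm S f = (f.2.1, f.1, -f.2.2) := by
  simp [substForm, qval, S]

lemma xiPlus_substForm_T_zpow (hf : f.1 ≠ 0) (n : ℤ) :
    xiPlus (substForm (T ^ n) f) = xiPlus f - n := by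
  rw [xiPlus, formDisc_substForm, substForm_T_zpow, xiPlus]
  push_cast
  field_simp
  ring

lemma xiPlus_substForm_S (hf : Irrational √(formDisc f : ℝ)) :
    xiPlus (substForm S f) = -(xiPlus f)⁻¹ := by
  have hm := fst_ne_zero_of_irrational_sqrt hf
  have hn := snd_fst_ne_zero_of_irrational_sqrt hf
  have hmul := fst_mul_xiPlus_mul_xiMinus hm (irrational_sqrt_intCast_iff.1 hf).2
  have hS : f.2.1 * xiPlus (substForm S f) = -(f.1 * xiMinus f) := by
    rw [xiPlus, formDisc_substForm, substForm_S, xiMinus]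
    push_cast
    field_simp
    ring
  rw [← inv_neg]
  refine eq_inv_of_mul_eq_one_left ?_
  apply mul_left_cancel₀ (Int.cast_ne_zero.2 hn : (f.2.1 : ℝ) ≠ 0)
  linear_combination -xiPlus f * hS + hmul

lemma xiPlus_substForm_T_zpow_mul_S (hf : Irrational √(formDisc f : ℝ)) (n : ℤ) :
    xiPlus (substForm (T ^ n * S) f) = (n - xiPlus f)⁻¹ := by
  rw [substForm_mul, xiPlus_substForm_S (by rwa [formDisc_substForm]),
    xiPlus_substForm_T_zpow (fst_ne_zero_of_irrational_sqrt hf), ← inv_neg, neg_sub]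

lemma xiMinus_substForm_T_zpow_mul_S (hf : Irrational √(formDisc f : ℝ)) (n : ℤ) :
    xiMinus (substForm (T ^ n * S) f) = (n - xiMinus f)⁻¹ := by
  rw [← xiPlus_neg, ← xiPlus_neg, ← substForm_neg,
    xiPlus_substForm_T_zpow_mul_S (by rwa [formDisc_neg])]

theorem tailEq_xiPlus_substForm (hf : Irrational √(formDisc f : ℝ)) (γ : SL(2, ℤ)) :
    TailEq (xiPlus (substForm γ f)) (xiPlus f) := by
  have hγ : γ ∈ Subgroup.closure {S, T} := by
    rw [SpecialLinearGroup.SL2Z_generators]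
    exact Subgroup.mem_top γ
  induction hγ using Subgroup.closure_induction generalizing f with
  | mem γ hγ =>
    rcases hγ with rfl | rfl
    · rw [xiPlus_substForm_S hf]
      exact tailEq_neg_inv _
    · have h := xiPlus_substForm_T_zpow (fst_ne_zero_of_irrational_sqrt hf) 1
      rw [zpow_one] at h
      exact h ▸ tailEq_sub_intCast _ 1
  | one =>
    rw [substForm_one]
    exact TailEq.refl _
  | mul γ δ _ _ ihγ ihδ =>
    rw [substForm_mul]
    exact (ihδ (by rwa [formDisc_substForm])).trans (ihγ hf)
  | inv γ _ ih =>
    have h := ih (f := substForm γ⁻¹ f) (by rwa [formDisc_substForm])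
    rw [← substForm_mul, inv_mul_cancel, substForm_one] at h
    exact h.symm

end Substitution

section ReducedForms

variable {D : ℤ} {f g : ℤ × ℤ × ℤ}

/-- The set of reduced forms of discriminant `D`. -/
def reducedForms (D : ℤ) : Set (ℤ × ℤ × ℤ) := {f | ReducedForm f ∧ formDisc f = D}

lemma finite_reducedForms (D : ℤ) : (reducedForms D).Finite := by
  have hbox := (finite_Icc 0 D).prod ((finite_Icc 0 D).prod (finite_Icc (-(D + 4 * D * D)) 0))
  refine hbox.subset ?_
  rintro ⟨m, n, k⟩ ⟨⟨hm, hn, hk, hsum⟩, hdisc⟩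
  simp only [formDisc] at hm hn hk hsum hdisc
  have hksq : (m + n + 1) ^ 2 ≤ k ^ 2 := by nlinarith
  have hmn : m + n ≤ D := by nlinarith [sq_nonneg (m - n)]
  have hprod : m * n ≤ D * D := mul_le_mul (by linarith) (by linarith) hn.le (by linarith)
  have hk_le : -k ≤ k ^ 2 := by nlinarith
  simp only [mem_prod, mem_Icc]
  refine ⟨⟨?_, ?_⟩, ⟨?_, ?_⟩, ?_, ?_⟩ <;> linarith

/-- The next form in the cycle of a reduced form: the change of variables
`(x, y) ↦ (b * x - y, x)` with `b = ⌈ξ⁺⌉`, which acts on `ξ⁺` as the shift `minusStep`. -/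
noncomputable def nextForm (f : ℤ × ℤ × ℤ) : ℤ × ℤ × ℤ :=
  substForm (T ^ ⌈xiPlus f⌉ * S) f

lemma xiPlus_nextForm (hf : Irrational √(formDisc f : ℝ)) :
    xiPlus (nextForm f) = minusStep (xiPlus f) :=
  xiPlus_substForm_T_zpow_mul_S hf _

lemma xiMinus_nextForm (hf : Irrational √(formDisc f : ℝ)) :
    xiMinus (nextForm f) = (⌈xiPlus f⌉ - xiMinus f)⁻¹ :=
  xiMinus_substForm_T_zpow_mul_S hf _

lemma formDisc_nextForm (f : ℤ × ℤ × ℤ) : formDisc (nextForm f) = formDisc f :=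
  formDisc_substForm _ _

lemma nextForm_fst (f : ℤ × ℤ × ℤ) :
    (nextForm f).1 = f.1 * ⌈xiPlus f⌉ ^ 2 + f.2.1 + f.2.2 * ⌈xiPlus f⌉ := by
  rw [nextForm, substForm_mul, substForm_S, substForm_T_zpow]

lemma ReducedForm.reducedForm_nextForm (hf : ReducedForm f) (hirr : Irrational √(formDisc f : ℝ)) :
    ReducedForm (nextForm f) := by
  have hdisc := hf.formDisc_pos
  obtain ⟨hm, -, hlt, hgt⟩ := (reducedForm_iff hdisc).1 hf
  have hlt_ceil : xiPlus f < ⌈xiPlus f⌉ :=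
    (Int.le_ceil _).lt_of_ne ((irrational_xiPlus hirr).ne_int _)
  have htwo : (2 : ℝ) ≤ ⌈xiPlus f⌉ := by
    exact_mod_cast (Int.lt_ceil.2 (by exact_mod_cast hgt) : (1 : ℤ) < ⌈xiPlus f⌉)
  rw [reducedForm_iff (by rwa [formDisc_nextForm]), xiPlus_nextForm hirr, xiMinus_nextForm hirr]
  refine ⟨?_, inv_pos.2 (by linarith), inv_lt_one_of_one_lt₀ (by linarith),
    (one_lt_inv₀ (by linarith)).2 (by linarith [Int.ceil_lt_add_one (xiPlus f)])⟩
  have hprod : (0 : ℝ) < f.1 * ((⌈xiPlus f⌉ - xiPlus f) * (⌈xiPlus f⌉ - xiMinus f)) :=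
    mul_pos (by exact_mod_cast hm) (mul_pos (by linarith) (by linarith))
  rw [fst_mul_sub_xiPlus_mul_sub_xiMinus hm.ne' hdisc.le, add_right_comm] at hprod
  rw [nextForm_fst]
  exact_mod_cast hprod

lemma mapsTo_nextForm (hD : Irrational √(D : ℝ)) :
    MapsTo nextForm (reducedForms D) (reducedForms D) := by
  rintro f ⟨hf, rfl⟩
  exact ⟨hf.reducedForm_nextForm hD, formDisc_nextForm f⟩

lemma mapsTo_minusStep (hD : Irrational √(D : ℝ)) :
    MapsTo minusStep (xiPlus '' reducedForms D) (xiPlus '' reducedForms D) := by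
  rintro _ ⟨f, hf, rfl⟩
  exact ⟨nextForm f, mapsTo_nextForm hD hf, xiPlus_nextForm (hf.2 ▸ hD)⟩

-- Galois' argument: `⌈ξ⁺⌉` can be recovered from the next form because its conjugate root is
-- `(⌈ξ⁺⌉ - ξ⁻)⁻¹` and `0 < ξ⁻ < 1`.
lemma injOn_minusStep (hD : Irrational √(D : ℝ)) : InjOn minusStep (xiPlus '' reducedForms D) := by
  rintro _ ⟨f, hf, rfl⟩ _ ⟨g, hg, rfl⟩ hstep
  have hfD : Irrational √(formDisc f : ℝ) := hf.2 ▸ hD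
  have hgD : Irrational √(formDisc g : ℝ) := hg.2 ▸ hD
  have hnext : nextForm f = nextForm g := by
    refine injOn_xiPlus hD (mapsTo_nextForm hD hf).2 (mapsTo_nextForm hD hg).2 ?_
    rw [xiPlus_nextForm hfD, xiPlus_nextForm hgD, hstep]
  have hconj : ⌈xiPlus f⌉ - xiMinus f = ⌈xiPlus g⌉ - xiMinus g := by
    rw [← inv_inj, ← xiMinus_nextForm hfD, ← xiMinus_nextForm hgD, hnext]
  obtain ⟨-, hf₀, hf₁, -⟩ := (reducedForm_iff hf.1.formDisc_pos).1 hf.1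
  obtain ⟨-, hg₀, hg₁, -⟩ := (reducedForm_iff hg.1.formDisc_pos).1 hg.1
  have hceil : ⌈xiPlus f⌉ = ⌈xiPlus g⌉ := by
    have hlt : |(⌈xiPlus f⌉ - ⌈xiPlus g⌉ : ℝ)| < 1 := by
      rw [abs_lt]
      constructor <;> linarith
    exact sub_eq_zero.1 (Int.abs_lt_one_iff.1 (by exact_mod_cast hlt))
  rwa [minusStep, minusStep, inv_inj, hceil, sub_right_inj] at hstep

theorem ReducedForm.xiPlus_mem_periodicPts (hf : ReducedForm f)
    (hirr : Irrational √(formDisc f : ℝ)) : xiPlus f ∈ periodicPts minusStep :=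
  subset_periodicPts_of_injOn ((finite_reducedForms _).image _) (mapsTo_minusStep hirr)
    (injOn_minusStep hirr) ⟨f, ⟨hf, rfl⟩, rfl⟩

theorem ReducedForm.image_xiPlus_class (hf : ReducedForm f)
    (hirr : Irrational √(formDisc f : ℝ)) :
    xiPlus '' {g | SLEquiv f g ∧ ReducedForm g} = range (minusStep^[·] (xiPlus f)) := by
  apply subset_antisymm
  · rintro _ ⟨g, ⟨hequiv, hg⟩, rfl⟩
    obtain ⟨γ, rfl⟩ := slEquiv_iff_exists_substForm_eq.1 hequiv
    obtain ⟨i, j, hij⟩ := tailEq_xiPlus_substForm hirr γ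
    exact mem_range_iterate_of_iterate_eq
      (hg.xiPlus_mem_periodicPts (by rwa [formDisc_substForm])) hij
  · rintro _ ⟨j, rfl⟩
    induction j with
    | zero => exact ⟨f, ⟨slEquiv_iff_exists_substForm_eq.2 ⟨1, substForm_one f⟩, hf⟩, rfl⟩
    | succ j ih =>
      obtain ⟨g, ⟨hequiv, hg⟩, hxi⟩ := ih
      have hirr' : Irrational √(formDisc g : ℝ) := by rwa [hequiv.formDisc_eq]
      refine ⟨nextForm g, ⟨hequiv.trans_substForm _, hg.reducedForm_nextForm hirr'⟩, ?_⟩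
      simp only [xiPlus_nextForm hirr', hxi, iterate_succ_apply']

lemma ReducedForm.ncard_class (hf : ReducedForm f) (hirr : Irrational √(formDisc f : ℝ)) :
    {g | SLEquiv f g ∧ ReducedForm g}.ncard = minimalPeriod minusStep (xiPlus f) := by
  have hinj : InjOn xiPlus {g | SLEquiv f g ∧ ReducedForm g} :=
    (injOn_xiPlus hirr).mono fun _ hg ↦ hg.1.formDisc_eq
  rw [← hinj.ncard_image, hf.image_xiPlus_class hirr,
    ncard_range_iterate (hf.xiPlus_mem_periodicPts hirr)]

end ReducedForms

/-- For a reduced form `h`, the minus continued fraction of `ξ⁺(h)` is purely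
periodic; the length of its period equals the number of reduced forms in the class
of `h`, and the values `ξ⁺` of the reduced forms of the class are exactly the numbers
whose minus continued fraction is purely periodic with period a cyclic permutation of
the period of `ξ⁺(h)`. -/
theorem statement18 (m n k : ℤ) (hred : ReducedForm (m, n, k))
    (hpos : 0 < formDisc (m, n, k)) (hsq : ¬ IsSquare (formDisc (m, n, k))) :
    (∃ s : List ℤ, IsPurelyPeriodicMCF s (xiPlus (m, n, k))) ∧
    ∀ s : List ℤ, IsPurelyPeriodicMCF s (xiPlus (m, n, k)) →
      ({g : ℤ × ℤ × ℤ | SLEquiv (m, n, k) g ∧ ReducedForm g}.ncard = s.length ∧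
       {x : ℝ | ∃ g : ℤ × ℤ × ℤ, SLEquiv (m, n, k) g ∧ ReducedForm g ∧ x = xiPlus g}
          = {x : ℝ | ∃ s' : List ℤ, List.IsRotated s s' ∧ IsPurelyPeriodicMCF s' x}) := by
  have hirr : Irrational √(formDisc (m, n, k) : ℝ) :=
    (irrational_sqrt_intCast_iff_of_nonneg hpos.le).2 hsq
  refine ⟨exists_isPurelyPeriodicMCF_iff.2 (hred.xiPlus_mem_periodicPts hirr), fun s hs ↦ ⟨?_, ?_⟩⟩
  · rw [hred.ncard_class hirr, hs.minimalPeriod_eq]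
  · rw [hs.setOf_isRotated_eq_range_iterate, ← hred.image_xiPlus_class hirr]
    ext x
    simp only [mem_image, mem_ofPred_eq, and_assoc, eq_comm]
end

section
/- Let h be a reduced integer binary quadratic form with discriminant Δ>0 not a perfect square, whose SL(2,ℤ)-equivalence class is supersymmetric, antisymmetric, or (m+n)-symmetric, and let (c_1,…,c_t) be the period of the minus continued fraction expansion of the quadratic surd ξ⁺(h). Then c_1+c_2+⋯+c_t = 3t. -/
/-! The minus continued fraction step of Zagier's theory permutes the finitely many reduced
forms of a class, acting on the roots `ξ⁺` by `ξ ↦ 1 / (⌈ξ⌉ - ξ)`. It acts transitively, since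
`SL(2, ℤ)`-equivalent irrationals have continued fractions with a common tail. So over a period the
partial quotients sum to `∑ ⌈ξ⁺ g⌉`, the sum being over the `r` reduced forms `g` of the class.

It remains to count in two ways the forms of the class whose outer coefficients satisfy `m > 0 > n`.
On the one hand they are the translates `g(x + j y, y)` of the reduced `g` by `0 < j < ⌈ξ⁺ g⌉`, so
there are `∑ (⌈ξ⁺ g⌉ - 1)` of them. On the other hand, the sign of the value at `(1, -1)` says
whether such a form is `g(x + y, y)` with `g` reduced, or `g(x, x + y)` with `-g` reduced. The
symmetry of the class provides as many forms of the second kind as of the first, which gives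
`∑ (⌈ξ⁺ g⌉ - 1) = 2 r`. -/

namespace MinusCF

open Function

section PeriodicSums

lemma sum_range_mul_of_periodic {M : Type*} [AddCommMonoid M] {u : ℕ → M} {p : ℕ}
    (hu : Periodic u p) (q : ℕ) :
    ∑ i ∈ Finset.range (q * p), u i = q • ∑ i ∈ Finset.range p, u i := by
  induction q with
  | zero => simp
  | succ q ih =>
    have hshift (i : ℕ) : u (q * p + i) = u i := by rw [add_comm]; exact hu.nat_mul q i
    simp only [add_mul, one_mul, Finset.sum_range_add, ih, hshift, succ_nsmul]

lemma mul_sum_range_eq_of_periodic {R : Type*} [NonAssocSemiring R] {u : ℕ → R} {p q : ℕ}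
    (hp : Periodic u p) (hq : Periodic u q) :
    q * ∑ i ∈ Finset.range p, u i = p * ∑ i ∈ Finset.range q, u i := by
  rw [← nsmul_eq_mul, ← nsmul_eq_mul, ← sum_range_mul_of_periodic hp,
    ← sum_range_mul_of_periodic hq, mul_comm]

lemma sum_range_length_of_getD {M : Type*} [AddCommMonoid M] {u : ℕ → M} {s : List M} {d : M}
    (hu : ∀ j, u j = s.getD (j % s.length) d) :
    ∑ i ∈ Finset.range s.length, u i = s.sum := by
  rw [← Fin.sum_univ_getElem, ← Fin.sum_univ_eq_sum_range]
  refine Finset.sum_congr rfl fun i _ => ?_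
  rw [hu, Nat.mod_eq_of_lt i.2, List.getD_eq_getElem _ _ i.2]

end PeriodicSums

section Orbits

variable {α : Type*} {φ : α → α} {x y : α}

lemma exists_iterate_eq_of_iterate_eq (hy : y ∈ periodicPts φ) {i j : ℕ}
    (h : φ^[i] x = φ^[j] y) : ∃ n, φ^[n] x = y := by
  obtain ⟨p, hp, hpy⟩ := hy
  refine ⟨(p * j - j) + i, ?_⟩
  rw [iterate_add_apply, h, ← iterate_add_apply, Nat.sub_add_cancel (Nat.le_mul_of_pos_left j hp)]
  exact hpy.mul_const j

lemma bijective_iterate_fin_minimalPeriod (hx : x ∈ periodicPts φ)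
    (hφ : ∀ y, ∃ n, φ^[n] x = y) :
    Bijective fun i : Fin (minimalPeriod φ x) => φ^[i] x := by
  refine ⟨fun i j hij => Fin.ext (iterate_injOn_Iio_minimalPeriod i.2 j.2 hij), fun y => ?_⟩
  obtain ⟨n, rfl⟩ := hφ y
  exact ⟨⟨n % minimalPeriod φ x, Nat.mod_lt _ (minimalPeriod_pos_of_mem_periodicPts hx)⟩,
    iterate_mod_minimalPeriod_eq⟩

end Orbits

section TailEquivalence

/-- The shift `ξ ↦ 1 / (⌈ξ⌉ - ξ)` of minus continued fractions, so that `minusIter ξ` is the orbit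
of `ξ` under it. -/
noncomputable def minusStep (ξ : ℝ) : ℝ := 1 / (⌈ξ⌉ - ξ)

lemma minusIter_eq_iterate (ξ : ℝ) (n : ℕ) : minusIter ξ n = minusStep^[n] ξ := by
  induction n with
  | zero => rfl
  | succ n ih => rw [iterate_succ_apply', ← ih]; rfl

/-- Two real numbers are tail equivalent if their minus continued fractions agree from some place
on, i.e. if their orbits under `minusStep` meet. -/
def TailEquiv (x y : ℝ) : Prop := ∃ i j, minusStep^[i] x = minusStep^[j] y

namespace TailEquiv

lemma refl (x : ℝ) : TailEquiv x x := ⟨0, 0, rfl⟩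

lemma symm {x y : ℝ} (h : TailEquiv x y) : TailEquiv y x :=
  let ⟨i, j, hij⟩ := h
  ⟨j, i, hij.symm⟩

lemma trans {x y z : ℝ} (hxy : TailEquiv x y) (hyz : TailEquiv y z) : TailEquiv x z := by
  obtain ⟨i, j, hij⟩ := hxy
  obtain ⟨k, l, hkl⟩ := hyz
  refine ⟨k + i, j + l, ?_⟩
  rw [iterate_add_apply, hij, ← iterate_add_apply, add_comm, iterate_add_apply, hkl,
    ← iterate_add_apply]

end TailEquiv

lemma tailEquiv_minusStep (x : ℝ) : TailEquiv x (minusStep x) := ⟨1, 0, rfl⟩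

lemma tailEquiv_add_intCast (x : ℝ) (n : ℤ) : TailEquiv x (x + n) := by
  refine ⟨1, 1, ?_⟩
  simp only [iterate_one, minusStep, Int.ceil_add_intCast, Int.cast_add, add_sub_add_right_eq_sub]

lemma minusStep_neg {y : ℝ} (h₀ : 0 ≤ y) (h₁ : y < 1) : minusStep (-y) = y⁻¹ := by
  have hceil : ⌈-y⌉ = 0 := by rw [Int.ceil_eq_iff]; constructor <;> push_cast <;> linarith
  simp [minusStep, hceil]

lemma minusStep_inv {y : ℝ} (h₁ : 1 < y) : minusStep y⁻¹ = (y - 1)⁻¹ + 1 := by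
  have hceil : ⌈y⁻¹⌉ = 1 := by
    rw [Int.ceil_eq_iff]
    constructor <;> push_cast
    · simpa using zero_lt_one.trans h₁
    · exact inv_le_one_of_one_le₀ h₁.le
  have hy : y ≠ 0 := by linarith
  have hy' : y - 1 ≠ 0 := by linarith
  rw [minusStep, hceil, Int.cast_one]
  field_simp
  ring

-- Subtracting `1` from `y > 1` costs one step of the expansion of `y⁻¹` and none of that of `-y`.
lemma tailEquiv_inv_neg_of_lt (n : ℕ) {y : ℝ} (h₀ : 0 ≤ y) (hn : y < n + 1) :
    TailEquiv y⁻¹ (-y) := by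
  induction n generalizing y with
  | zero =>
    rw [← minusStep_neg h₀ (by simpa using hn)]
    exact (tailEquiv_minusStep _).symm
  | succ n ih =>
    rcases lt_trichotomy y 1 with h₁ | rfl | h₁
    · rw [← minusStep_neg h₀ h₁]
      exact (tailEquiv_minusStep _).symm
    · convert tailEquiv_add_intCast (1 : ℝ)⁻¹ (-2) using 1
      norm_num
    · have hinv : TailEquiv y⁻¹ (y - 1)⁻¹ := by
        have := tailEquiv_minusStep y⁻¹
        rw [minusStep_inv h₁] at this
        exact this.trans (by simpa using (tailEquiv_add_intCast (y - 1)⁻¹ 1).symm)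
      have hneg : TailEquiv (-(y - 1)) (-y) := by
        convert tailEquiv_add_intCast (-(y - 1)) (-1) using 1
        push_cast
        ring
      exact (hinv.trans (ih (by linarith) (by push_cast at hn; linarith))).trans hneg

lemma tailEquiv_inv_neg (y : ℝ) : TailEquiv y⁻¹ (-y) := by
  rcases le_total 0 y with h | h
  · obtain ⟨n, hn⟩ := exists_nat_gt y
    exact tailEquiv_inv_neg_of_lt n h (by linarith)
  · obtain ⟨n, hn⟩ := exists_nat_gt (-y⁻¹)
    have := tailEquiv_inv_neg_of_lt n (y := -y⁻¹) (by simpa using h) (by linarith)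
    simpa using this.symm

end TailEquivalence

section Transform

open Matrix.SpecialLinearGroup ModularGroup MatrixGroups

/-- The form `f ∘ M`, the right action of `SL(2, ℤ)` on binary quadratic forms by change of
variables. -/
def transform (f : ℤ × ℤ × ℤ) (M : SL(2, ℤ)) : ℤ × ℤ × ℤ :=
  (qval f (M 0 0) (M 1 0), qval f (M 0 1) (M 1 1),
    2 * f.1 * M 0 0 * M 0 1 + 2 * f.2.1 * M 1 0 * M 1 1 + f.2.2 * (M 0 0 * M 1 1 + M 0 1 * M 1 0))

lemma qval_transform (f : ℤ × ℤ × ℤ) (M : SL(2, ℤ)) (x y : ℤ) :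
    qval (transform f M) x y = qval f (M 0 0 * x + M 0 1 * y) (M 1 0 * x + M 1 1 * y) := by
  simp only [qval, transform]
  ring

lemma qval_neg (f : ℤ × ℤ × ℤ) (x y : ℤ) : qval (-f) x y = -qval f x y := by
  simp only [qval, Prod.fst_neg, Prod.snd_neg]
  ring

lemma eq_of_qval_eq {f g : ℤ × ℤ × ℤ} (h : ∀ x y, qval f x y = qval g x y) : f = g := by
  obtain ⟨m, n, k⟩ := f
  obtain ⟨m', n', k'⟩ := g
  have h₁ := h 1 0
  have h₂ := h 0 1
  have h₃ := h 1 1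
  simp only [qval] at h₁ h₂ h₃
  ext <;> linarith

lemma transform_one (f : ℤ × ℤ × ℤ) : transform f 1 = f :=
  eq_of_qval_eq fun x y => by simp [qval_transform]

lemma transform_mul (f : ℤ × ℤ × ℤ) (M N : SL(2, ℤ)) :
    transform f (M * N) = transform (transform f M) N := by
  refine eq_of_qval_eq fun x y => ?_
  simp only [qval_transform, coe_mul, Matrix.mul_apply, Fin.sum_univ_two]
  congr 1 <;> ring

lemma transform_transform_inv (f : ℤ × ℤ × ℤ) (M : SL(2, ℤ)) :
    transform (transform f M) M⁻¹ = f := by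
  rw [← transform_mul, mul_inv_cancel, transform_one]

lemma transform_inv_transform (f : ℤ × ℤ × ℤ) (M : SL(2, ℤ)) :
    transform (transform f M⁻¹) M = f := by
  rw [← transform_mul, inv_mul_cancel, transform_one]

lemma transform_bijective (M : SL(2, ℤ)) : Bijective (transform · M) :=
  bijective_iff_has_inverse.2
    ⟨(transform · M⁻¹), (transform_transform_inv · M), (transform_inv_transform · M)⟩

lemma transform_neg (f : ℤ × ℤ × ℤ) (M : SL(2, ℤ)) : transform (-f) M = -transform f M :=
  eq_of_qval_eq fun x y => by simp only [qval_transform, qval_neg]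

lemma transform_S (f : ℤ × ℤ × ℤ) : transform f S = (f.2.1, f.1, -f.2.2) := by
  simp [transform, qval, coe_S]

lemma transform_T_zpow (f : ℤ × ℤ × ℤ) (j : ℤ) :
    transform f (T ^ j) = (f.1, qval f j 1, f.2.2 + 2 * f.1 * j) := by
  simp [transform, qval, coe_T_zpow, add_comm]

lemma transform_T_transpose (f : ℤ × ℤ × ℤ) :
    transform f T.transpose = (qval f 1 1, f.2.1, f.2.2 + 2 * f.2.1) := by
  simp [transform, qval, coe_T, add_comm]

lemma formDisc_transform (f : ℤ × ℤ × ℤ) (M : SL(2, ℤ)) :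
    formDisc (transform f M) = formDisc f := by
  have hdet : M 0 0 * M 1 1 - M 0 1 * M 1 0 = 1 := by rw [← Matrix.det_fin_two, M.det_coe]
  have h : formDisc (transform f M) = formDisc f * (M 0 0 * M 1 1 - M 0 1 * M 1 0) ^ 2 := by
    simp only [formDisc, transform, qval]
    ring
  rw [h, hdet, one_pow, mul_one]

lemma slEquiv_iff_exists_transform {f g : ℤ × ℤ × ℤ} :
    SLEquiv f g ↔ ∃ M : SL(2, ℤ), transform f M = g := by
  constructor
  · rintro ⟨a, b, c, d, hdet, hg⟩
    let M : SL(2, ℤ) := ⟨!![a, b; c, d], by rw [Matrix.det_fin_two_of, hdet]⟩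
    exact ⟨M, eq_of_qval_eq fun x y => (qval_transform f M x y).trans (hg x y).symm⟩
  · rintro ⟨M, rfl⟩
    exact ⟨_, _, _, _, by rw [← Matrix.det_fin_two, M.det_coe], qval_transform f M⟩

lemma slEquiv_refl (f : ℤ × ℤ × ℤ) : SLEquiv f f :=
  slEquiv_iff_exists_transform.2 ⟨1, transform_one f⟩

lemma slEquiv_trans {f g h : ℤ × ℤ × ℤ} (hfg : SLEquiv f g) (hgh : SLEquiv g h) :
    SLEquiv f h := by
  rw [slEquiv_iff_exists_transform] at *
  obtain ⟨M, rfl⟩ := hfg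
  obtain ⟨N, rfl⟩ := hgh
  exact ⟨M * N, transform_mul f M N⟩

lemma slEquiv_transform_iff {f g : ℤ × ℤ × ℤ} (M : SL(2, ℤ)) :
    SLEquiv f (transform g M) ↔ SLEquiv f g := by
  refine ⟨fun h => slEquiv_trans h ?_, fun h => slEquiv_trans h ?_⟩
  · exact slEquiv_iff_exists_transform.2 ⟨M⁻¹, transform_transform_inv g M⟩
  · exact slEquiv_iff_exists_transform.2 ⟨M, rfl⟩

lemma formDisc_eq_of_slEquiv {f g : ℤ × ℤ × ℤ} (h : SLEquiv f g) : formDisc g = formDisc f := by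
  obtain ⟨M, rfl⟩ := slEquiv_iff_exists_transform.1 h
  exact formDisc_transform f M

lemma isSquare_formDisc_of_qval_eq_zero {f : ℤ × ℤ × ℤ} {x y : ℤ} (h : qval f x y = 0)
    (hxy : x ≠ 0 ∨ y ≠ 0) : IsSquare (formDisc f) := by
  have isSquare_of_mul_sq {a z : ℤ} (hz : z ≠ 0) (ha : ∃ b, a * z ^ 2 = b ^ 2) : IsSquare a := by
    obtain ⟨b, hb⟩ := ha
    obtain ⟨c, rfl⟩ := (Int.pow_dvd_pow_iff two_ne_zero).1 (Dvd.intro_left a hb)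
    exact ⟨c, mul_right_cancel₀ (pow_ne_zero 2 hz) (by linear_combination hb)⟩
  simp only [qval] at h
  rcases hxy with hx | hy
  · refine isSquare_of_mul_sq hx ⟨2 * f.2.1 * y + f.2.2 * x, ?_⟩
    rw [formDisc]
    linear_combination (-4 * f.2.1) * h
  · refine isSquare_of_mul_sq hy ⟨2 * f.1 * x + f.2.2 * y, ?_⟩
    rw [formDisc]
    linear_combination (-4 * f.1) * h

end Transform

section Roots

open ModularGroup MatrixGroups

variable {f g : ℤ × ℤ × ℤ}

lemma xiMinus_eq_xiPlus_neg (f : ℤ × ℤ × ℤ) : xiMinus f = xiPlus (-f) := by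
  simp only [xiMinus, xiPlus, formDisc, Prod.fst_neg, Prod.snd_neg]
  push_cast
  rw [← neg_div_neg_eq]
  ring_nf

lemma xiPlus_transform_T_zpow (hf : f.1 ≠ 0) (j : ℤ) :
    xiPlus (transform f (T ^ j)) = xiPlus f - j := by
  have hm : (f.1 : ℝ) ≠ 0 := by exact_mod_cast hf
  simp only [xiPlus, formDisc_transform]
  rw [transform_T_zpow]
  push_cast
  field_simp
  ring

lemma xiMinus_transform_T_zpow (hf : f.1 ≠ 0) (j : ℤ) :
    xiMinus (transform f (T ^ j)) = xiMinus f - j := by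
  rw [xiMinus_eq_xiPlus_neg, ← transform_neg, xiPlus_transform_T_zpow (by simpa using hf),
    xiMinus_eq_xiPlus_neg]

lemma sq_sqrt_formDisc (hf : 0 ≤ formDisc f) :
    √(formDisc f : ℝ) ^ 2 = (f.2.2 : ℝ) ^ 2 - 4 * f.1 * f.2.1 := by
  rw [Real.sq_sqrt (by exact_mod_cast hf), formDisc]
  push_cast
  rfl

lemma qval_eq_mul_sub_mul_sub (hm : f.1 ≠ 0) (hf : 0 ≤ formDisc f) (j : ℤ) :
    (qval f j 1 : ℝ) = f.1 * ((j - xiMinus f) * (j - xiPlus f)) := by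
  have hm' : (f.1 : ℝ) ≠ 0 := by exact_mod_cast hm
  simp only [xiMinus, xiPlus, qval]
  push_cast
  field_simp
  linear_combination sq_sqrt_formDisc hf

/- Here irrational `√Δ` encodes that `Δ` is positive and not a square. -/
variable (hf : Irrational √(formDisc f : ℝ))
include hf

lemma formDisc_pos_of_irrational : 0 < formDisc f := by
  exact_mod_cast Real.sqrt_pos.1 ((Real.sqrt_nonneg _).lt_of_ne hf.ne_zero.symm)

lemma qval_ne_zero {x y : ℤ} (hxy : x ≠ 0 ∨ y ≠ 0) : qval f x y ≠ 0 := fun h =>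
  (irrational_sqrt_intCast_iff.1 hf).1 (isSquare_formDisc_of_qval_eq_zero h hxy)

lemma fst_ne_zero : f.1 ≠ 0 := by
  simpa [qval] using qval_ne_zero hf (x := 1) (y := 0) (by simp)

lemma snd_ne_zero : f.2.1 ≠ 0 := by
  simpa [qval] using qval_ne_zero hf (x := 0) (y := 1) (by simp)

lemma xiPlus_transform_S : xiPlus (transform f S) = -(xiPlus f)⁻¹ := by
  have hn : (f.2.1 : ℝ) ≠ 0 := by exact_mod_cast snd_ne_zero hf
  have hnum : -(f.2.2 : ℝ) + √(formDisc f : ℝ) ≠ 0 := by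
    simpa using (hf.intCast_add (-f.2.2)).ne_zero
  simp only [xiPlus, formDisc_transform]
  rw [transform_S]
  push_cast
  field_simp
  linear_combination sq_sqrt_formDisc (formDisc_pos_of_irrational hf).le

lemma xiMinus_transform_S : xiMinus (transform f S) = -(xiMinus f)⁻¹ := by
  have hf' : Irrational √(formDisc (-f) : ℝ) := by
    simpa only [formDisc, Prod.fst_neg, Prod.snd_neg, neg_sq, mul_neg, neg_mul, neg_neg] using hf
  rw [xiMinus_eq_xiPlus_neg, ← transform_neg, xiPlus_transform_S hf', xiMinus_eq_xiPlus_neg]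

lemma irrational_xiPlus : Irrational (xiPlus f) := by
  simpa [xiPlus] using
    (hf.intCast_add (-f.2.2)).div_intCast (mul_ne_zero two_ne_zero (fst_ne_zero hf))

lemma irrational_xiMinus : Irrational (xiMinus f) := by
  simpa [xiMinus] using
    (hf.intCast_sub (-f.2.2)).div_intCast (mul_ne_zero two_ne_zero (fst_ne_zero hf))

lemma xiMinus_lt_xiPlus (hm : 0 < f.1) : xiMinus f < xiPlus f := by
  have hm' : (0 : ℝ) < f.1 := by exact_mod_cast hm
  have hΔ := Real.sqrt_pos.2 (Int.cast_pos.2 (formDisc_pos_of_irrational hf) : (0 : ℝ) < formDisc f)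
  rw [xiMinus, xiPlus]
  exact div_lt_div_of_pos_right (by linarith) (mul_pos two_pos hm')

lemma qval_neg_iff (hm : 0 < f.1) (j : ℤ) :
    qval f j 1 < 0 ↔ xiMinus f < j ∧ (j : ℝ) < xiPlus f := by
  have hm' : (0 : ℝ) < f.1 := by exact_mod_cast hm
  have hroots := xiMinus_lt_xiPlus hf hm
  rw [← Int.cast_lt_zero (R := ℝ),
    qval_eq_mul_sub_mul_sub hm.ne' (formDisc_pos_of_irrational hf).le,
    mul_neg_iff, mul_neg_iff]
  simp only [hm', hm'.not_gt, true_and, false_and, or_false]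
  constructor
  · rintro (h | h) <;> constructor <;> linarith [h.1, h.2]
  · exact fun h => Or.inl ⟨by linarith [h.1], by linarith [h.2]⟩

lemma qval_pos_iff (hm : 0 < f.1) (j : ℤ) :
    0 < qval f j 1 ↔ (j : ℝ) < xiMinus f ∨ xiPlus f < j := by
  have hne : qval f j 1 ≠ 0 := qval_ne_zero hf (Or.inr one_ne_zero)
  rw [← not_iff_not, not_lt, hne.le_iff_lt, qval_neg_iff hf hm, not_or, not_lt, not_lt,
    ((irrational_xiMinus hf).ne_int j).le_iff_lt, ((irrational_xiPlus hf).ne_int j).symm.le_iff_lt]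

lemma eq_of_xiPlus_eq (hfg : formDisc g = formDisc f) (h : xiPlus f = xiPlus g) : f = g := by
  have hm : (f.1 : ℝ) ≠ 0 := by exact_mod_cast fst_ne_zero hf
  have hm' : (g.1 : ℝ) ≠ 0 := by exact_mod_cast fst_ne_zero (f := g) (by rwa [hfg])
  have hlin : ((g.1 - f.1 : ℤ) : ℝ) * √(formDisc f : ℝ) =
      ((g.1 * f.2.2 - f.1 * g.2.2 : ℤ) : ℝ) := by
    simp only [xiPlus, hfg] at h
    field_simp at h
    push_cast
    linear_combination h
  have hfst : f.1 = g.1 := by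
    by_contra hne
    exact (hf.intCast_mul (sub_ne_zero.2 (Ne.symm hne))).ne_int _ hlin
  have hmid : f.2.2 = g.2.2 := by
    rw [hfst, sub_self, Int.cast_zero, zero_mul, eq_comm, Int.cast_eq_zero, ← mul_sub] at hlin
    exact sub_eq_zero.1 ((mul_eq_zero.1 hlin).resolve_left (by exact_mod_cast hm'))
  have hsnd : f.2.1 = g.2.1 := by
    rw [formDisc, formDisc, hfst, hmid, sub_right_inj] at hfg
    exact (mul_left_cancel₀ (mul_ne_zero four_ne_zero (by exact_mod_cast hm')) hfg).symm
  exact Prod.ext hfst (Prod.ext hsnd hmid)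

lemma tailEquiv_xiPlus_transform (M : SL(2, ℤ)) :
    TailEquiv (xiPlus f) (xiPlus (transform f M)) := by
  have hM : M ∈ Subgroup.closure {S, T} := by
    rw [SpecialLinearGroup.SL2Z_generators]
    trivial
  induction hM using Subgroup.closure_induction generalizing f with
  | mem M hM =>
    rcases hM with rfl | rfl
    · rw [xiPlus_transform_S hf]
      simpa using (tailEquiv_inv_neg (xiPlus f)⁻¹)
    · have := xiPlus_transform_T_zpow (fst_ne_zero hf) 1
      rw [zpow_one] at this
      rw [this]
      simpa [sub_eq_add_neg] using tailEquiv_add_intCast (xiPlus f) (-1)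
  | one => rw [transform_one]; exact .refl _
  | mul M N _ _ hM hN =>
    rw [transform_mul]
    exact (hM hf).trans (hN (by rwa [formDisc_transform]))
  | inv M _ hM =>
    have := hM (f := transform f M⁻¹) (by rwa [formDisc_transform])
    rw [transform_inv_transform] at this
    exact this.symm

end Roots

section Reduction

open ModularGroup MatrixGroups

/-- A form is simple, in the sense of Zagier, if its outer coefficients satisfy `m > 0 > n`. -/
def SimpleForm (f : ℤ × ℤ × ℤ) : Prop := 0 < f.1 ∧ f.2.1 < 0

variable {f g : ℤ × ℤ × ℤ}

lemma reducedForm_iff_qval : ReducedForm f ↔ 0 < f.1 ∧ 0 < f.2.1 ∧ qval f 1 1 < 0 := by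
  simp only [ReducedForm, qval]
  constructor <;> rintro ⟨hm, hn, h⟩ <;> refine ⟨hm, hn, ?_⟩
  · linarith [h.2]
  · constructor <;> linarith

lemma simpleForm_iff_roots (hf : Irrational √(formDisc f : ℝ)) :
    SimpleForm f ↔ 0 < f.1 ∧ xiMinus f < 0 ∧ 0 < xiPlus f :=
  and_congr_right fun hm => by simpa [qval] using qval_neg_iff hf hm 0

lemma reducedForm_iff_roots (hf : Irrational √(formDisc f : ℝ)) :
    ReducedForm f ↔ 0 < f.1 ∧ 0 < xiMinus f ∧ xiMinus f < 1 ∧ 1 < xiPlus f := by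
  rw [reducedForm_iff_qval]
  refine and_congr_right fun hm => ?_
  have h₀ : 0 < f.2.1 ↔ 0 < xiMinus f ∨ xiPlus f < 0 := by
    simpa [qval] using qval_pos_iff hf hm 0
  have h₁ : qval f 1 1 < 0 ↔ xiMinus f < 1 ∧ 1 < xiPlus f := by
    simpa using qval_neg_iff hf hm 1
  rw [h₀, h₁, or_and_right]
  exact or_iff_left fun h => by linarith [h.1, h.2.2]

/-- One step of the minus continued fraction on forms: the coordinate change sending the root `ξ⁺`
to `1 / (⌈ξ⁺⌉ - ξ⁺)`. -/
noncomputable def reductionStep (f : ℤ × ℤ × ℤ) : ℤ × ℤ × ℤ := transform f (T ^ ⌈xiPlus f⌉ * S)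

variable (hf : Irrational √(formDisc f : ℝ))
include hf

lemma xiPlus_reductionStep : xiPlus (reductionStep f) = minusStep (xiPlus f) := by
  rw [reductionStep, transform_mul, xiPlus_transform_S (by rwa [formDisc_transform]),
    xiPlus_transform_T_zpow (fst_ne_zero hf), ← inv_neg, neg_sub, minusStep, one_div]

lemma xiMinus_reductionStep : xiMinus (reductionStep f) = (⌈xiPlus f⌉ - xiMinus f)⁻¹ := by
  rw [reductionStep, transform_mul, xiMinus_transform_S (by rwa [formDisc_transform]),
    xiMinus_transform_T_zpow (fst_ne_zero hf), ← inv_neg, neg_sub]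

lemma reducedForm_reductionStep (h : ReducedForm f) : ReducedForm (reductionStep f) := by
  obtain ⟨hm, -, h₁, h₂⟩ := (reducedForm_iff_roots hf).1 h
  have hceil : xiPlus f < ⌈xiPlus f⌉ :=
    (Int.le_ceil _).lt_of_ne ((irrational_xiPlus hf).ne_int _)
  have hceil' := Int.ceil_lt_add_one (xiPlus f)
  rw [reducedForm_iff_roots (by rwa [reductionStep, formDisc_transform]),
    xiPlus_reductionStep hf, xiMinus_reductionStep hf, minusStep]
  refine ⟨?_, inv_pos.2 (by linarith), inv_lt_one_of_one_lt₀ ?_, ?_⟩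
  · rw [reductionStep, transform_mul, transform_S, transform_T_zpow]
    exact (qval_pos_iff hf hm _).2 (Or.inr hceil)
  · have htwo : (1 : ℤ) < ⌈xiPlus f⌉ := Int.lt_ceil.2 (by exact_mod_cast h₂)
    have : (1 : ℝ) + 1 ≤ ⌈xiPlus f⌉ := by exact_mod_cast Int.add_one_le_of_lt htwo
    linarith
  · exact (one_lt_div (by linarith)).2 (by linarith)

lemma ceil_inv_xiMinus_reductionStep (h : ReducedForm f) :
    ⌈(xiMinus (reductionStep f))⁻¹⌉ = ⌈xiPlus f⌉ := by
  obtain ⟨-, h₀, h₁, -⟩ := (reducedForm_iff_roots hf).1 h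
  rw [xiMinus_reductionStep hf, inv_inv, Int.ceil_eq_iff]
  constructor <;> linarith

lemma reductionStep_injective_of_reducedForm (hg : Irrational √(formDisc g : ℝ))
    (hf' : ReducedForm f) (hg' : ReducedForm g) (h : reductionStep f = reductionStep g) :
    f = g := by
  have hceil : ⌈xiPlus f⌉ = ⌈xiPlus g⌉ := by
    rw [← ceil_inv_xiMinus_reductionStep hf hf', h, ceil_inv_xiMinus_reductionStep hg hg']
  rw [reductionStep, reductionStep, hceil] at h
  exact (transform_bijective _).injective h

lemma simpleForm_transform_T_zpow (h : ReducedForm f) {j : ℤ} (hj : j ∈ Set.Ioo 0 ⌈xiPlus f⌉) :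
    SimpleForm (transform f (T ^ j)) := by
  obtain ⟨hm, -, h₁, -⟩ := (reducedForm_iff_roots hf).1 h
  have hj₁ : (1 : ℝ) ≤ j := by exact_mod_cast Int.add_one_le_of_lt hj.1
  rw [simpleForm_iff_roots (by rwa [formDisc_transform]), xiMinus_transform_T_zpow hm.ne',
    xiPlus_transform_T_zpow hm.ne', transform_T_zpow]
  exact ⟨hm, by linarith, sub_pos.2 (Int.lt_ceil.1 hj.2)⟩

lemma floor_xiMinus_transform_T_zpow (h : ReducedForm f) (j : ℤ) :
    ⌊xiMinus (transform f (T ^ j))⌋ = -j := by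
  obtain ⟨-, h₀, h₁, -⟩ := (reducedForm_iff_roots hf).1 h
  rw [xiMinus_transform_T_zpow (fst_ne_zero hf), Int.floor_eq_iff]
  constructor <;> push_cast <;> linarith

lemma reducedForm_transform_T_zpow_floor (h : SimpleForm f) :
    ReducedForm (transform f (T ^ ⌊xiMinus f⌋)) := by
  obtain ⟨hm, h₀, h₁⟩ := (simpleForm_iff_roots hf).1 h
  have hfloor : (⌊xiMinus f⌋ : ℝ) < xiMinus f :=
    (Int.floor_le _).lt_of_ne ((irrational_xiMinus hf).ne_int _).symm
  have hfloor' : (⌊xiMinus f⌋ : ℝ) ≤ -1 := by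
    have : ⌊xiMinus f⌋ < 0 := Int.floor_lt.2 (by simpa using h₀)
    exact_mod_cast Int.le_sub_one_of_lt this
  rw [reducedForm_iff_roots (by rwa [formDisc_transform]), xiMinus_transform_T_zpow hm.ne',
    xiPlus_transform_T_zpow hm.ne', transform_T_zpow]
  exact ⟨hm, by linarith, by linarith [Int.lt_floor_add_one (xiMinus f)], by linarith⟩

lemma neg_floor_xiMinus_mem_Ioo (h : SimpleForm f) :
    -⌊xiMinus f⌋ ∈ Set.Ioo 0 ⌈xiPlus (transform f (T ^ ⌊xiMinus f⌋))⌉ := by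
  obtain ⟨hm, h₀, h₁⟩ := (simpleForm_iff_roots hf).1 h
  rw [xiPlus_transform_T_zpow hm.ne']
  refine ⟨Int.neg_pos_of_neg (Int.floor_lt.2 (by simpa using h₀)), Int.lt_ceil.2 ?_⟩
  push_cast
  linarith

end Reduction

section Counting

open ModularGroup MatrixGroups

/-- The reduced forms in the class of `f`. -/
def reducedClass (f : ℤ × ℤ × ℤ) : Set (ℤ × ℤ × ℤ) := {g | SLEquiv f g ∧ ReducedForm g}

/-- The simple forms in the class of `f`. -/
def simpleClass (f : ℤ × ℤ × ℤ) : Set (ℤ × ℤ × ℤ) := {g | SLEquiv f g ∧ SimpleForm g}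

variable {f g : ℤ × ℤ × ℤ}

lemma finite_simpleClass (f : ℤ × ℤ × ℤ) : (simpleClass f).Finite := by
  set D := formDisc f
  refine (Set.Finite.prod (Set.finite_Icc 0 D)
    (Set.Finite.prod (Set.finite_Icc (-D) 0) (Set.finite_Icc (-D) D))).subset ?_
  rintro ⟨m, n, k⟩ ⟨hfg, hm, hn⟩
  have hD : k ^ 2 + 4 * (m * -n) = D := by
    simp only [D, ← formDisc_eq_of_slEquiv hfg, formDisc]
    ring
  dsimp only at hm hn
  have hk : |k| ≤ k ^ 2 := by
    rw [← sq_abs]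
    exact Int.le_self_sq _
  have hmn : m ≤ m * -n := le_mul_of_one_le_right hm.le (by linarith)
  have hnm : -n ≤ m * -n := le_mul_of_one_le_left (by linarith) hm
  have hkD := abs_le.1 (show |k| ≤ D by linarith)
  have := sq_nonneg k
  exact ⟨⟨hm.le, by linarith⟩, ⟨by linarith, hn.le⟩, hkD⟩

lemma ncard_setOf_and_comp {α : Type*} {φ : α → α} (hφ : Bijective φ) {c : α → Prop}
    (hc : ∀ a, c (φ a) ↔ c a) (p : α → Prop) :
    {a | c a ∧ p (φ a)}.ncard = {a | c a ∧ p a}.ncard := by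
  have : {a | c a ∧ p (φ a)} = φ ⁻¹' {a | c a ∧ p a} := by simp only [Set.preimage_ofPred_eq, hc]
  rw [this, Set.ncard, Set.encard_preimage_of_bijective hφ, Set.ncard]

lemma reducedForm_iff_transform_T :
    ReducedForm g ↔ SimpleForm (transform g T) ∧ 0 < qval (transform g T) 1 (-1) := by
  have hT : transform g T = (g.1, qval g 1 1, g.2.2 + 2 * g.1) := by
    simpa using transform_T_zpow g 1
  have hval : qval (transform g T) 1 (-1) = g.2.1 := by
    simp only [hT, qval]
    ring
  rw [reducedForm_iff_qval, hval, hT, SimpleForm]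
  tauto

lemma reducedForm_neg_iff_transform_T_transpose :
    ReducedForm (-g) ↔ SimpleForm (transform g T.transpose) ∧
      qval (transform g T.transpose) 1 (-1) < 0 := by
  have hval : qval (transform g T.transpose) 1 (-1) = g.1 := by
    simp only [transform_T_transpose, qval]
    ring
  rw [reducedForm_iff_qval, hval, transform_T_transpose, SimpleForm, qval_neg, Prod.fst_neg,
    Prod.snd_neg, Prod.fst_neg, neg_pos, neg_pos, neg_lt_zero]
  tauto

lemma ncard_simpleClass_eq_add (hf : Irrational √(formDisc f : ℝ)) :
    (simpleClass f).ncard =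
      (reducedClass f).ncard + {g | SLEquiv f g ∧ ReducedForm (-g)}.ncard := by
  have hsplit : simpleClass f =
      {g | SLEquiv f g ∧ SimpleForm g ∧ 0 < qval g 1 (-1)} ∪
      {g | SLEquiv f g ∧ SimpleForm g ∧ qval g 1 (-1) < 0} := by
    ext g
    have (hfg : SLEquiv f g) : qval g 1 (-1) ≠ 0 :=
      qval_ne_zero (by rwa [formDisc_eq_of_slEquiv hfg]) (Or.inl one_ne_zero)
    simp only [simpleClass, Set.mem_ofPred_eq, Set.mem_union]
    grind
  have hdisj : Disjoint {g | SLEquiv f g ∧ SimpleForm g ∧ 0 < qval g 1 (-1)}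
      {g | SLEquiv f g ∧ SimpleForm g ∧ qval g 1 (-1) < 0} :=
    Set.disjoint_left.2 fun g hg hg' => hg.2.2.not_gt hg'.2.2
  have hfin := Set.finite_union.1 (hsplit ▸ finite_simpleClass f)
  have hcls (M : SL(2, ℤ)) (g : ℤ × ℤ × ℤ) : SLEquiv f (transform g M) ↔ SLEquiv f g :=
    slEquiv_transform_iff M
  have hpos : (reducedClass f).ncard =
      {g | SLEquiv f g ∧ SimpleForm g ∧ 0 < qval g 1 (-1)}.ncard := by
    simp only [reducedClass, reducedForm_iff_transform_T]
    exact ncard_setOf_and_comp (transform_bijective T) (hcls T)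
      fun g => SimpleForm g ∧ 0 < qval g 1 (-1)
  have hneg : {g | SLEquiv f g ∧ ReducedForm (-g)}.ncard =
      {g | SLEquiv f g ∧ SimpleForm g ∧ qval g 1 (-1) < 0}.ncard := by
    simp only [reducedForm_neg_iff_transform_T_transpose]
    exact ncard_setOf_and_comp (transform_bijective T.transpose) (hcls _)
      fun g => SimpleForm g ∧ qval g 1 (-1) < 0
  rw [hsplit, Set.ncard_union_eq hdisj hfin.1 hfin.2, hpos, hneg]

lemma finite_reducedClass (f : ℤ × ℤ × ℤ) : (reducedClass f).Finite := by
  refine Set.Finite.of_finite_image ((finite_simpleClass f).subset ?_)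
    (transform_bijective T).injective.injOn
  rintro _ ⟨g, ⟨hfg, hg⟩, rfl⟩
  exact ⟨(slEquiv_transform_iff T).2 hfg, (reducedForm_iff_transform_T.1 hg).1⟩

noncomputable instance (f : ℤ × ℤ × ℤ) : Fintype (reducedClass f) :=
  (finite_reducedClass f).fintype

lemma slEquiv_neg (h : SLEquiv f g) : SLEquiv (-f) (-g) := by
  obtain ⟨M, rfl⟩ := slEquiv_iff_exists_transform.1 h
  exact slEquiv_iff_exists_transform.2 ⟨M, transform_neg f M⟩

lemma qval_antipF (f : ℤ × ℤ × ℤ) (x y : ℤ) : qval (antipF f) x y = -qval f y x := by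
  simp only [qval, antipF]
  ring

lemma slEquiv_antipF (h : SLEquiv f g) : SLEquiv (antipF f) (antipF g) := by
  obtain ⟨a, b, c, d, hdet, hg⟩ := h
  refine ⟨d, c, b, a, by linarith, fun x y => ?_⟩
  rw [qval_antipF, qval_antipF, hg, add_comm (a * y), add_comm (c * y)]

lemma ncard_setOf_reducedForm_neg_eq
    (hsym : SLEquiv f (adjF f) ∨ SLEquiv f (antipF f)) :
    {g | SLEquiv f g ∧ ReducedForm (-g)}.ncard = (reducedClass f).ncard := by
  have of_involutive {φ : ℤ × ℤ × ℤ → ℤ × ℤ × ℤ} (hφ : Involutive φ)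
      (hcls : ∀ g, SLEquiv f g → SLEquiv f (φ g))
      (hred : ∀ g, ReducedForm (-g) ↔ ReducedForm (φ g)) :
      {g | SLEquiv f g ∧ ReducedForm (-g)}.ncard = (reducedClass f).ncard := by
    simp only [hred]
    refine ncard_setOf_and_comp hφ.bijective (fun g => ⟨fun h => ?_, hcls g⟩) ReducedForm
    exact hφ g ▸ hcls _ h
  rcases hsym with hadj | hantip
  · have hneg : SLEquiv f (-f) := by
      rw [← slEquiv_transform_iff S, transform_S] at hadj
      simpa only [adjF, ← Prod.neg_mk] using hadj
    exact of_involutive neg_involutive (fun g h => slEquiv_trans hneg (slEquiv_neg h))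
      fun _ => Iff.rfl
  · refine of_involutive (φ := antipF) (fun g => ?_)
      (fun g h => slEquiv_trans hantip (slEquiv_antipF h)) fun g => ?_
    · simp [antipF]
    · simp only [ReducedForm, antipF, Prod.fst_neg, Prod.snd_neg]
      constructor <;> intro h <;> refine ⟨h.2.1, h.1, h.2.2.1, by linarith [h.2.2.2]⟩

lemma irrational_of_slEquiv (hf : Irrational √(formDisc f : ℝ)) (h : SLEquiv f g) :
    Irrational √(formDisc g : ℝ) := by
  rwa [formDisc_eq_of_slEquiv h]

/-- Zagier's parametrization of the simple forms in a class: they are the translates of the reduced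
forms `g` by `0 < j < ⌈ξ⁺ g⌉`. -/
noncomputable def simpleOfReduced (hf : Irrational √(formDisc f : ℝ)) :
    (Σ g : reducedClass f, Set.Ioo 0 ⌈xiPlus (g : ℤ × ℤ × ℤ)⌉) → simpleClass f :=
  fun ⟨⟨g, hfg, hg⟩, j, hj⟩ => ⟨transform g (T ^ j), (slEquiv_transform_iff _).2 hfg,
    simpleForm_transform_T_zpow (irrational_of_slEquiv hf hfg) hg hj⟩

lemma simpleOfReduced_bijective (hf : Irrational √(formDisc f : ℝ)) :
    Bijective (simpleOfReduced hf) := by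
  constructor
  · rintro ⟨⟨g, hfg, hg⟩, j, hj⟩ ⟨⟨h, hfh, hh⟩, i, hi⟩ heq
    have heq' : transform g (T ^ j) = transform h (T ^ i) := congrArg Subtype.val heq
    obtain rfl : j = i := by
      rw [← neg_inj, ← floor_xiMinus_transform_T_zpow (irrational_of_slEquiv hf hfg) hg, heq',
        floor_xiMinus_transform_T_zpow (irrational_of_slEquiv hf hfh) hh]
    obtain rfl := (transform_bijective _).injective heq'
    rfl
  · rintro ⟨g, hfg, hg⟩
    have hirr := irrational_of_slEquiv hf hfg
    refine ⟨⟨⟨_, (slEquiv_transform_iff _).2 hfg, reducedForm_transform_T_zpow_floor hirr hg⟩,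
      _, neg_floor_xiMinus_mem_Ioo hirr hg⟩, Subtype.ext ?_⟩
    simp only [simpleOfReduced, zpow_neg, transform_transform_inv]

lemma sum_ceil_xiPlus_sub_one (hf : Irrational √(formDisc f : ℝ)) :
    ∑ g : reducedClass f, (⌈xiPlus (g : ℤ × ℤ × ℤ)⌉ - 1) = (simpleClass f).ncard := by
  rw [← Nat.card_coe_set_eq, ← Nat.card_eq_of_bijective _ (simpleOfReduced_bijective hf),
    Nat.card_sigma, Nat.cast_sum]
  refine Finset.sum_congr rfl fun ⟨g, hfg, hg⟩ _ => ?_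
  have := ((reducedForm_iff_roots (irrational_of_slEquiv hf hfg)).1 hg).2.2.2
  have hceil : 0 < ⌈xiPlus g⌉ := Int.ceil_pos.2 (by linarith)
  rw [Nat.card_eq_fintype_card, Int.card_fintype_Ioo_of_lt _ _ hceil, sub_zero]

lemma sum_ceil_xiPlus_reducedClass (hf : Irrational √(formDisc f : ℝ))
    (hsym : SLEquiv f (adjF f) ∨ SLEquiv f (antipF f)) :
    ∑ g : reducedClass f, ⌈xiPlus (g : ℤ × ℤ × ℤ)⌉ = 3 * Fintype.card (reducedClass f) := by
  have h := sum_ceil_xiPlus_sub_one hf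
  rw [ncard_simpleClass_eq_add hf, ncard_setOf_reducedForm_neg_eq hsym, ← Nat.card_coe_set_eq,
    Nat.card_eq_fintype_card, Finset.sum_sub_distrib, Finset.sum_const, Finset.card_univ,
    nsmul_one] at h
  push_cast at h
  linarith

end Counting

section Cycle

variable {f : ℤ × ℤ × ℤ}

/-- The reduction step as a self-map of the finite set of reduced forms in a class. -/
noncomputable def reducedStep (hf : Irrational √(formDisc f : ℝ)) (g : reducedClass f) :
    reducedClass f :=
  ⟨reductionStep g, (slEquiv_transform_iff _).2 g.2.1,
    reducedForm_reductionStep (irrational_of_slEquiv hf g.2.1) g.2.2⟩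

variable (hf : Irrational √(formDisc f : ℝ))
include hf

lemma reducedStep_injective : Injective (reducedStep hf) := fun g h hgh =>
  Subtype.ext <| reductionStep_injective_of_reducedForm (irrational_of_slEquiv hf g.2.1)
    (irrational_of_slEquiv hf h.2.1) g.2.2 h.2.2 (congrArg Subtype.val hgh)

lemma mem_periodicPts_reducedStep (g : reducedClass f) : g ∈ periodicPts (reducedStep hf) :=
  (reducedStep_injective hf).mem_periodicPts g

lemma xiPlus_iterate_reducedStep (g : reducedClass f) (n : ℕ) :
    xiPlus ((reducedStep hf)^[n] g : reducedClass f) = minusStep^[n] (xiPlus g) := by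
  have hsemi : Semiconj (fun g : reducedClass f => xiPlus g) (reducedStep hf) minusStep :=
    fun g => xiPlus_reductionStep (irrational_of_slEquiv hf g.2.1)
  exact (hsemi.iterate_right n) g

lemma exists_iterate_reducedStep_eq (g h : reducedClass f) :
    ∃ n, (reducedStep hf)^[n] g = h := by
  have htail {g : ℤ × ℤ × ℤ} (hfg : SLEquiv f g) : TailEquiv (xiPlus f) (xiPlus g) := by
    obtain ⟨M, rfl⟩ := slEquiv_iff_exists_transform.1 hfg
    exact tailEquiv_xiPlus_transform hf M
  obtain ⟨i, j, hij⟩ := (htail g.2.1).symm.trans (htail h.2.1)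
  refine exists_iterate_eq_of_iterate_eq (mem_periodicPts_reducedStep hf h) (i := i) (j := j) ?_
  rw [← xiPlus_iterate_reducedStep hf, ← xiPlus_iterate_reducedStep hf] at hij
  have hi := formDisc_eq_of_slEquiv ((reducedStep hf)^[i] g).2.1
  have hj := formDisc_eq_of_slEquiv ((reducedStep hf)^[j] h).2.1
  exact Subtype.ext (eq_of_xiPlus_eq (by rwa [hi]) (hj.trans hi.symm) hij)

lemma mcfTerm_xiPlus (g : reducedClass f) (n : ℕ) :
    mcfTerm (xiPlus g) n = ⌈xiPlus ((reducedStep hf)^[n] g : reducedClass f)⌉ := by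
  rw [mcfTerm, minusIter_eq_iterate, xiPlus_iterate_reducedStep]

lemma periodic_mcfTerm_xiPlus (g : reducedClass f) :
    Periodic (mcfTerm (xiPlus g)) (minimalPeriod (reducedStep hf) g) := fun n => by
  rw [mcfTerm_xiPlus hf, mcfTerm_xiPlus hf, iterate_add_minimalPeriod_eq]

lemma sum_mcfTerm_xiPlus (g : reducedClass f)
    (hsym : SLEquiv f (adjF f) ∨ SLEquiv f (antipF f)) :
    ∑ i ∈ Finset.range (minimalPeriod (reducedStep hf) g), mcfTerm (xiPlus g) i =
      3 * minimalPeriod (reducedStep hf) g := by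
  have horbit := bijective_iterate_fin_minimalPeriod (mem_periodicPts_reducedStep hf g)
    (exists_iterate_reducedStep_eq hf g)
  have hsum : ∑ i : Fin (minimalPeriod (reducedStep hf) g), mcfTerm (xiPlus g) i =
      ∑ h : reducedClass f, ⌈xiPlus (h : ℤ × ℤ × ℤ)⌉ :=
    Fintype.sum_bijective _ horbit _ _ fun i => mcfTerm_xiPlus hf g i
  rw [← Fin.sum_univ_eq_sum_range, hsum, sum_ceil_xiPlus_reducedClass hf hsym,
    ← Fintype.card_of_bijective horbit, Fintype.card_fin]

end Cycle

end MinusCF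

/-- If the class of a reduced form is supersymmetric, antisymmetric or
`(m+n)`-symmetric, and `(c₁, …, c_t)` is the period of the minus continued fraction
of `ξ⁺`, then `c₁ + ⋯ + c_t = 3t`. -/
theorem statement19 (m n k : ℤ) (hred : ReducedForm (m, n, k))
    (hpos : 0 < formDisc (m, n, k)) (hsq : ¬ IsSquare (formDisc (m, n, k)))
    (hsym :
      (SLEquiv (m, n, k) (conjF (m, n, k)) ∧ SLEquiv (m, n, k) (adjF (m, n, k))) ∨
      (SLEquiv (m, n, k) (antipF (m, n, k)) ∧ ¬ SLEquiv (m, n, k) (conjF (m, n, k)) ∧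
        ¬ SLEquiv (m, n, k) (adjF (m, n, k))) ∨
      (SLEquiv (m, n, k) (adjF (m, n, k)) ∧ ¬ SLEquiv (m, n, k) (conjF (m, n, k))))
    (s : List ℤ) (hs : IsPurelyPeriodicMCF s (xiPlus (m, n, k))) :
    s.sum = 3 * (s.length : ℤ) := by
  set f := (m, n, k)
  have hf : Irrational √(formDisc f : ℝ) := irrational_sqrt_intCast_iff.2 ⟨hsq, hpos.le⟩
  have hsym' : SLEquiv f (adjF f) ∨ SLEquiv f (antipF f) := by tauto
  obtain ⟨-, hterm, -⟩ := hs
  let g : MinusCF.reducedClass f := ⟨f, MinusCF.slEquiv_refl f, hred⟩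
  set P := Function.minimalPeriod (MinusCF.reducedStep hf) g
  have hP : (P : ℤ) ≠ 0 := by
    exact_mod_cast (Function.minimalPeriod_pos_of_mem_periodicPts
      (MinusCF.mem_periodicPts_reducedStep hf g)).ne'
  have hperiodic : Function.Periodic (mcfTerm (xiPlus f)) s.length := fun j => by
    rw [hterm, hterm, Nat.add_mod_right]
  have hsums := MinusCF.mul_sum_range_eq_of_periodic hperiodic
    (MinusCF.periodic_mcfTerm_xiPlus hf g)
  rw [MinusCF.sum_range_length_of_getD hterm, MinusCF.sum_mcfTerm_xiPlus hf g hsym'] at hsums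
  exact mul_left_cancel₀ hP (by linarith)
end
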